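/- arXiv:1606.07551 — 3 statements merged into one kernel-verified Lean document; each statement's English description precedes it below -/
import Mathlib

section
/- Let G be a finite connected simple graph that is not a complete graph and contains no induced subgraph isomorphic to the path P_4 on four vertices. Then G is a join of two graphs: there exist nonempty graphs G_1 and G_2 such that G ≅ G_1 ∨ G_2. Equivalently, the complement of G is disconnected. -/
namespace SimpleGraph

variable {V : Type*}

/-- No four vertices `a, b, c, d` of `G` induce the path `a - b - c - d`. -/
def InducedP4Free (G : SimpleGraph V) : Prop :=
  ∀ a b c d, G.Adj a b → G.Adj b c → G.Adj c d →
    Gᶜ.Adj a c → Gᶜ.Adj b d → ¬ Gᶜ.Adj a d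

/-- The vertex set `s` has a nonempty proper subset with no edge of `G` to the rest of `s`. -/
def HasEmptyCut (G : SimpleGraph V) (s : Finset V) : Prop :=
  ∃ t ⊂ s, t.Nonempty ∧ ∀ a ∈ t, ∀ b ∈ s, b ∉ t → ¬ G.Adj a b

/-- The path on four vertices is self-complementary. -/
lemma InducedP4Free.compl {G : SimpleGraph V} (h : G.InducedP4Free) : Gᶜ.InducedP4Free := by
  intro a b c d hab hbc hcd hac hbd had
  rw [compl_compl] at hac hbd had
  exact h b d a c hbd had.symm hac hab.symm hcd.symm hbc

lemma inducedP4Free_of_forall_induce {G : SimpleGraph V}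
    (h : ∀ s : Set V, ¬ Nonempty (G.induce s ≃g pathGraph 4)) : G.InducedP4Free := by
  intro a b c d hab hbc hcd hac hbd had
  have hadj : ∀ i j : Fin 4, G.Adj (![a, b, c, d] i) (![a, b, c, d] j) ↔
      (pathGraph 4).Adj i j := by
    rw [compl_adj] at hac hbd had
    intro i j
    fin_cases i <;> fin_cases j <;>
      simp [pathGraph_adj, hab, hbc, hcd, hac, hbd, had, G.adj_comm b a, G.adj_comm c b,
        G.adj_comm d c, G.adj_comm c a, G.adj_comm d b, G.adj_comm d a]
  have hinj : Function.Injective ![a, b, c, d] := by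
    intro i j
    fin_cases i <;> fin_cases j <;>
      simp [hab.ne, hbc.ne, hcd.ne, hac.ne, hbd.ne, had.ne, hab.ne', hbc.ne', hcd.ne', hac.ne',
        hbd.ne', had.ne']
  exact h (Set.range ![a, b, c, d])
    ⟨RelIso.symm ⟨Equiv.ofInjective _ hinj, fun {i j} => hadj i j⟩⟩

lemma HasEmptyCut.exists_mem [DecidableEq V] {G : SimpleGraph V} {s : Finset V}
    (h : G.HasEmptyCut s) {x : V} (hx : x ∈ s) :
    ∃ t ⊂ s, x ∈ t ∧ ∀ a ∈ t, ∀ b ∈ s, b ∉ t → ¬ G.Adj a b := by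
  obtain ⟨t, hts, ⟨y, hy⟩, ht⟩ := h
  by_cases hxt : x ∈ t
  · exact ⟨t, hts, hxt, ht⟩
  · refine ⟨s \ t, Finset.sdiff_ssubset hts.subset ⟨y, hy⟩, by simp [hx, hxt], ?_⟩
    intro a ha b hb hbt hab
    rw [Finset.mem_sdiff] at ha
    exact ht b (by simpa [hb] using hbt) a ha.1 ha.2 hab.symm

lemma HasEmptyCut.insert_or_compl [DecidableEq V] {G : SimpleGraph V} (hG : G.InducedP4Free)
    {s : Finset V} (h : G.HasEmptyCut s) {v : V} (hv : v ∉ s) :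
    G.HasEmptyCut (insert v s) ∨ Gᶜ.HasEmptyCut (insert v s) := by
  by_cases hall : ∀ x ∈ s, G.Adj v x
  · right
    obtain ⟨t, hts, ⟨y, hy⟩, -⟩ := h
    refine ⟨s, Finset.ssubset_insert hv, ⟨y, hts.subset hy⟩, ?_⟩
    intro a ha b hb hbs
    obtain rfl : b = v := (Finset.mem_insert.1 hb).resolve_right hbs
    simp [(hall a ha).symm]
  left
  push Not at hall
  obtain ⟨x, hxs, hvx⟩ := hall
  obtain ⟨t, ⟨hts, hxt, ht⟩, hmin⟩ := exists_minimal_of_wellFoundedLT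
    (fun t : Finset V => t ⊂ s ∧ x ∈ t ∧ ∀ a ∈ t, ∀ b ∈ s, b ∉ t → ¬ G.Adj a b)
    (h.exists_mem hxs)
  by_cases hA : ∀ y ∈ t, ¬ G.Adj v y
  · refine ⟨t, hts.trans (Finset.ssubset_insert hv), ⟨x, hxt⟩, ?_⟩
    intro a ha b hb hbt
    obtain rfl | hb := Finset.mem_insert.1 hb
    · exact fun hab => hA a ha hab.symm
    · exact ht a ha b hb hbt
  by_cases hB : ∀ w ∈ s, w ∉ t → ¬ G.Adj v w
  · refine ⟨insert v t, ?_, ⟨v, by simp⟩, ?_⟩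
    · obtain ⟨w, hws, hwt⟩ := Finset.exists_of_ssubset hts
      refine Finset.ssubset_iff_subset_ne.2 ⟨Finset.insert_subset_insert v hts.subset, fun e => ?_⟩
      have hw : w ∈ insert v t := e ▸ Finset.mem_insert_of_mem hws
      grind
    · grind
  push Not at hA hB
  obtain ⟨y, hyt, hvy⟩ := hA
  obtain ⟨w, hws, hwt, hvw⟩ := hB
  -- By minimality of `t`, some neighbour of `v` in `t` is adjacent to some non-neighbour in `t`.
  obtain ⟨z, hzt, hvz, u, hut, hvu, hzu⟩ :
      ∃ z ∈ t, ¬ G.Adj v z ∧ ∃ u ∈ t, G.Adj v u ∧ G.Adj z u := by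
    classical
    by_contra! hno
    have hsub : t.filter (fun z => ¬ G.Adj v z) ⊆ t := Finset.filter_subset _ _
    have hle := hmin (y := t.filter (fun z => ¬ G.Adj v z))
      ⟨hsub.trans_ssubset hts, by simp [hxt, hvx], by grind⟩ hsub
    exact (Finset.mem_filter.1 (hle hyt)).2 hvy
  have hne : ∀ p ∈ t, Gᶜ.Adj p w := fun p hp =>
    (G.compl_adj p w).2 ⟨fun e => hwt (e ▸ hp), ht p hp w hws hwt⟩
  refine (hG z u v w hzu hvu.symm hvw ((G.compl_adj z v).2 ⟨?_, fun e => hvz e.symm⟩)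
    (hne u hut) (hne z hzt)).elim
  rintro rfl
  exact hv (hts.subset hzt)

lemma InducedP4Free.hasEmptyCut_or_compl {G : SimpleGraph V} (hG : G.InducedP4Free)
    {s : Finset V} (hs : s.Nontrivial) : G.HasEmptyCut s ∨ Gᶜ.HasEmptyCut s := by
  classical
  induction s using Finset.induction_on with
  | empty => simp at hs
  | insert v s hv ih =>
    by_cases hs' : s.Nontrivial
    · obtain h | h := ih hs'
      · exact h.insert_or_compl hG hv
      · simpa [or_comm] using h.insert_or_compl hG.compl hv
    · obtain ⟨w, rfl⟩ : ∃ w, s = {w} := by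
        obtain rfl | hne := s.eq_empty_or_nonempty
        · simp at hs
        · exact hne.exists_eq_singleton_or_nontrivial.resolve_right hs'
      by_cases hvw : G.Adj v w
      · exact .inr ⟨{w}, Finset.ssubset_insert hv, by simp, by simp [hvw.symm]⟩
      · exact .inl ⟨{w}, Finset.ssubset_insert hv, by simp, by simp [G.adj_comm w v, hvw]⟩

lemma HasEmptyCut.not_connected [Fintype V] {G : SimpleGraph V}
    (h : G.HasEmptyCut Finset.univ) : ¬ G.Connected := by
  obtain ⟨t, hts, ⟨a, ha⟩, ht⟩ := h
  obtain ⟨b, -, hb⟩ := Finset.exists_of_ssubset hts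
  intro hG
  obtain ⟨p⟩ := hG.preconnected a b
  obtain ⟨d, -, hd, hd'⟩ := p.exists_boundary_dart (t : Set V) ha hb
  exact ht _ hd _ (Finset.mem_univ _) hd' d.adj

end SimpleGraph

/- **Statement 10.** Let `G` be a finite connected simple graph that is not complete and has
no induced subgraph isomorphic to the path `P_4`.  Then `G` is a join of two (nonempty)
graphs — i.e. the vertex set splits into two nonempty parts with all cross edges present —
and, equivalently, the complement of `G` is disconnected. -/
theorem join_decomposition_of_P4_free
    {V : Type*} [Fintype V] (G : SimpleGraph V) (hG : G.Connected) (hnc : G ≠ ⊤)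
    (hP4 : ∀ s : Set V, ¬ Nonempty (G.induce s ≃g SimpleGraph.pathGraph 4)) :
    (∃ s : Set V, s.Nonempty ∧ sᶜ.Nonempty ∧ ∀ u ∈ s, ∀ v ∈ sᶜ, G.Adj u v) ∧
      ¬ (Gᶜ).Connected := by
  have huniv : (Finset.univ : Finset V).Nontrivial := by
    obtain ⟨a, b, hab, -⟩ := SimpleGraph.ne_top_iff_exists_not_adj.1 hnc
    exact ⟨a, by simp, b, by simp, hab⟩
  have hcut : Gᶜ.HasEmptyCut Finset.univ :=
    ((SimpleGraph.inducedP4Free_of_forall_induce hP4).hasEmptyCut_or_compl huniv).resolve_left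
      fun h => h.not_connected hG
  refine ⟨?_, hcut.not_connected⟩
  obtain ⟨t, hts, hne, ht⟩ := hcut
  obtain ⟨b, -, hb⟩ := Finset.exists_of_ssubset hts
  refine ⟨t, hne, ⟨b, hb⟩, fun u hu v hv => ?_⟩
  by_contra huv
  exact ht u hu v (Finset.mem_univ v) hv
    ((G.compl_adj u v).2 ⟨fun e => hv (e ▸ hu), huv⟩)
end

section
/- Let G be a finite connected simple graph on n vertices that has exactly two distance eigenvalues (counted with multiplicity) different from −1 and −3. Then G is not a complete graph, n ≥ 4, ∂_3(G) ≤ −1 and ∂_n(G) ≥ −3; moreover ∂_2(G) > −1, i.e., both distance eigenvalues of G different from −1 and −3 are strictly greater than −1. -/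
/-- The distance matrix of a finite simple graph, over `ℝ`. -/
noncomputable def distMatrix {V : Type*} [Fintype V] (G : SimpleGraph V) : Matrix V V ℝ :=
  Matrix.of fun u v => (G.dist u v : ℝ)

/-- The multiset of distance eigenvalues of `G` (the roots, with multiplicity, of the
characteristic polynomial of the distance matrix). -/
noncomputable def distEigs {V : Type*} [Fintype V] [DecidableEq V] (G : SimpleGraph V) :
    Multiset ℝ :=
  (distMatrix G).charpoly.roots

/-- The distance eigenvalues of `G` listed in non-increasing order,
`∂_1 ≥ ∂_2 ≥ ... ≥ ∂_n`; the `i`-th eigenvalue `∂_i` is `(sortedDistEigs G).getD (i-1) 0`. -/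
noncomputable def sortedDistEigs {V : Type*} [Fintype V] [DecidableEq V] (G : SimpleGraph V) :
    List ℝ :=
  ((distEigs G).sort (· ≤ ·)).reverse

open Matrix in
/-- The quadratic form of a real symmetric matrix in an orthonormal basis of eigenvectors. -/
theorem Matrix.IsHermitian.dotProduct_mulVec_eq_sum_eigenvalues {V : Type*} [Fintype V]
    [DecidableEq V] {A : Matrix V V ℝ} (hA : A.IsHermitian) (x : V → ℝ) :
    x ⬝ᵥ A *ᵥ x = ∑ i, hA.eigenvalues i * ((hA.eigenvectorBasis i).ofLp ⬝ᵥ x) ^ 2 := by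
  have h := hA.eigenvectorBasis.sum_inner_mul_inner (WithLp.toLp 2 x) (WithLp.toLp 2 (A *ᵥ x))
  simp only [EuclideanSpace.inner_eq_star_dotProduct, star_trivial] at h
  rw [dotProduct_comm, ← h]
  refine Finset.sum_congr rfl fun i _ => ?_
  have hi : (A *ᵥ x) ⬝ᵥ (hA.eigenvectorBasis i).ofLp
      = hA.eigenvalues i * ((hA.eigenvectorBasis i).ofLp ⬝ᵥ x) := by
    rw [dotProduct_comm, dotProduct_mulVec, ← mulVec_transpose,
      show Aᵀ = A by simpa [IsHermitian, conjTranspose] using hA, hA.mulVec_eigenvectorBasis,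
      smul_dotProduct, smul_eq_mul]
  rw [hi]
  ring

open Matrix in
theorem Matrix.IsHermitian.dotProduct_self_eq_sum_eigenvectorBasis {V : Type*} [Fintype V]
    [DecidableEq V] {A : Matrix V V ℝ} (hA : A.IsHermitian) (x : V → ℝ) :
    x ⬝ᵥ x = ∑ i, ((hA.eigenvectorBasis i).ofLp ⬝ᵥ x) ^ 2 := by
  have h := hA.eigenvectorBasis.sum_inner_mul_inner (WithLp.toLp 2 x) (WithLp.toLp 2 x)
  simp only [EuclideanSpace.inner_eq_star_dotProduct, star_trivial] at h
  rw [← h]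
  refine Finset.sum_congr rfl fun i _ => ?_
  rw [dotProduct_comm x, sq]

open Matrix in
/-- A real symmetric matrix whose quadratic form exceeds `c ‖·‖ ^ 2` on a plane has at least two
eigenvalues greater than `c`. -/
theorem Matrix.IsHermitian.exists_two_lt_eigenvalues {V : Type*} [Fintype V] [DecidableEq V]
    {A : Matrix V V ℝ} (hA : A.IsHermitian) {c : ℝ} {y z : V → ℝ}
    (h : ∀ a b : ℝ, (a ≠ 0 ∨ b ≠ 0) →
      c * ((a • y + b • z) ⬝ᵥ (a • y + b • z)) < (a • y + b • z) ⬝ᵥ A *ᵥ (a • y + b • z)) :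
    ∃ i j, i ≠ j ∧ c < hA.eigenvalues i ∧ c < hA.eigenvalues j := by
  have key : ∀ a b : ℝ, (a ≠ 0 ∨ b ≠ 0) → ∃ i, c < hA.eigenvalues i ∧
      (hA.eigenvectorBasis i).ofLp ⬝ᵥ (a • y + b • z) ≠ 0 := by
    intro a b hab
    by_contra! hcon
    refine (h a b hab).not_ge ?_
    rw [hA.dotProduct_mulVec_eq_sum_eigenvalues, hA.dotProduct_self_eq_sum_eigenvectorBasis,
      Finset.mul_sum]
    refine Finset.sum_le_sum fun i _ => ?_
    rcases le_or_gt (hA.eigenvalues i) c with hi | hi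
    · gcongr
    · simp [hcon i hi]
  obtain ⟨i, hi, -⟩ := key 1 0 (by simp)
  set q := (hA.eigenvectorBasis i).ofLp with hq
  obtain ⟨a, b, hab, horth⟩ :
      ∃ a b : ℝ, (a ≠ 0 ∨ b ≠ 0) ∧ q ⬝ᵥ (a • y + b • z) = 0 := by
    by_cases hy : q ⬝ᵥ y = 0
    · exact ⟨1, 0, by simp, by simp [hy]⟩
    · refine ⟨q ⬝ᵥ z, -(q ⬝ᵥ y), Or.inr (neg_ne_zero.mpr hy), ?_⟩
      simp only [dotProduct_add, dotProduct_smul, smul_eq_mul]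
      ring
  obtain ⟨j, hj, hne⟩ := key a b hab
  exact ⟨i, j, by rintro rfl; exact hne horth, hi, hj⟩

theorem isHermitian_distMatrix {V : Type*} [Fintype V] (G : SimpleGraph V) :
    (distMatrix G).IsHermitian := by
  ext u v
  simp [distMatrix, SimpleGraph.dist_comm]

theorem distEigs_eq_map_eigenvalues {V : Type*} [Fintype V] [DecidableEq V]
    (G : SimpleGraph V) :
    distEigs G = Finset.univ.val.map (isHermitian_distMatrix G).eigenvalues :=
  (isHermitian_distMatrix G).roots_charpoly_eq_eigenvalues

theorem SimpleGraph.Connected.exists_adj_adj_dist_eq_two {V : Type*} {G : SimpleGraph V}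
    (hG : G.Connected) (hne : G ≠ ⊤) :
    ∃ u w v, G.Adj u w ∧ G.Adj w v ∧ u ≠ v ∧ G.dist u v = 2 := by
  obtain ⟨x, y, hxy, hadj⟩ := SimpleGraph.ne_top_iff_exists_not_adj.mp hne
  obtain ⟨p, hp⟩ := hG.exists_walk_length_eq_dist x y
  obtain ⟨u, w, v, huw, hwv, hnadj, huv⟩ := Walk.exists_adj_adj_not_adj_ne hp
    (p.reachable.one_lt_dist_of_ne_of_not_adj hxy hadj)
  refine ⟨u, w, v, huw, hwv, huv, le_antisymm ?_ ?_⟩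
  · exact SimpleGraph.dist_le (Walk.cons huw (Walk.cons hwv Walk.nil))
  · exact (hG u v).one_lt_dist_of_ne_of_not_adj huv hnadj

open Matrix in
/-- A connected non-complete graph has at least two distance eigenvalues greater than `-1`. -/
theorem exists_two_distMatrix_eigenvalues_gt_neg_one {V : Type*} [Fintype V] [DecidableEq V]
    {G : SimpleGraph V} (hG : G.Connected) (hne : G ≠ ⊤) :
    ∃ i j, i ≠ j ∧ -1 < (isHermitian_distMatrix G).eigenvalues i ∧
      -1 < (isHermitian_distMatrix G).eigenvalues j := by
  obtain ⟨u, w, v, huw, hwv, huv, hd⟩ := hG.exists_adj_adj_dist_eq_two hne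
  have d1 : G.dist u w = 1 := SimpleGraph.dist_eq_one_iff_adj.mpr huw
  have d2 : G.dist w v = 1 := SimpleGraph.dist_eq_one_iff_adj.mpr hwv
  have d1' : G.dist w u = 1 := SimpleGraph.dist_eq_one_iff_adj.mpr huw.symm
  have d2' : G.dist v w = 1 := SimpleGraph.dist_eq_one_iff_adj.mpr hwv.symm
  have hd' : G.dist v u = 2 := by rw [SimpleGraph.dist_comm, hd]
  refine (isHermitian_distMatrix G).exists_two_lt_eigenvalues
    (y := Pi.single u 1 + Pi.single v 1) (z := Pi.single w 1) fun a b hab => ?_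
  have hpos : 0 < 2 * a ^ 2 + (2 * a + b) ^ 2 := by
    by_cases ha : a = 0
    · have hb : b ≠ 0 := by simpa [ha] using hab
      have hb2 : 0 < b ^ 2 := by positivity
      simpa [ha] using hb2
    · positivity
  simp [mulVec_add, mulVec_smul, add_dotProduct, dotProduct_add, distMatrix, d1, d2, d1', d2',
    hd, hd', huw.ne, huw.ne.symm, hwv.ne, hwv.ne.symm, huv, huv.symm]
  nlinarith

open Matrix in
/-- A complete graph has at most one distance eigenvalue different from `-1`. -/
theorem distMatrix_top_eigenvalues_eq {V : Type*} [Fintype V] [DecidableEq V] {i j : V}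
    (hij : i ≠ j) (hi : (isHermitian_distMatrix (⊤ : SimpleGraph V)).eigenvalues i ≠ -1) :
    (isHermitian_distMatrix (⊤ : SimpleGraph V)).eigenvalues j = -1 := by
  set hA := isHermitian_distMatrix (⊤ : SimpleGraph V)
  by_contra hj
  have hmul : ∀ k u, (hA.eigenvalues k + 1) * (hA.eigenvectorBasis k).ofLp u
      = ∑ v, (hA.eigenvectorBasis k).ofLp v := by
    intro k u
    have h := congrFun (hA.mulVec_eigenvectorBasis k) u
    have hd : ∀ v, distMatrix (⊤ : SimpleGraph V) u v = 1 - if u = v then 1 else 0 := by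
      intro v
      by_cases huv : u = v <;> simp [distMatrix, SimpleGraph.dist_top, huv]
    simp only [mulVec, dotProduct, hd, sub_mul, one_mul, ite_mul, zero_mul,
      Finset.sum_sub_distrib, Finset.sum_ite_eq, Finset.mem_univ, if_true, Pi.smul_apply,
      smul_eq_mul] at h
    linarith
  have hsum : ∀ k, hA.eigenvalues k ≠ -1 → ∑ v, (hA.eigenvectorBasis k).ofLp v ≠ 0 := by
    intro k hk h0
    refine hA.eigenvectorBasis.orthonormal.ne_zero k ?_
    ext u
    have := hmul k u
    rw [h0] at this
    exact (mul_eq_zero.mp this).resolve_left fun h => hk (by linarith)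
  have horth : ∑ v, (hA.eigenvectorBasis i).ofLp v * (hA.eigenvectorBasis j).ofLp v = 0 := by
    have h := hA.eigenvectorBasis.orthonormal.2 hij
    simpa [EuclideanSpace.inner_eq_star_dotProduct, dotProduct, mul_comm] using h
  have h := congrArg (fun t => (hA.eigenvalues i + 1) * t) horth
  simp only [Finset.mul_sum, ← mul_assoc, hmul i, mul_zero] at h
  rw [← Finset.mul_sum] at h
  exact mul_ne_zero (hsum i hi) (hsum j hj) h

open Matrix in
/-- Neither `-1` nor `-3` is a distance eigenvalue of the path on three vertices. -/
theorem distMatrix_eigenvalues_ne_of_card_eq_three {V : Type*} [Fintype V] [DecidableEq V]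
    {G : SimpleGraph V} (hG : G.Connected) (hne : G ≠ ⊤) (hcard : Fintype.card V = 3) (i : V) :
    (isHermitian_distMatrix G).eigenvalues i ≠ -1 ∧
      (isHermitian_distMatrix G).eigenvalues i ≠ -3 := by
  obtain ⟨u, w, v, huw, hwv, huv, hd⟩ := hG.exists_adj_adj_dist_eq_two hne
  have d1 : G.dist u w = 1 := SimpleGraph.dist_eq_one_iff_adj.mpr huw
  have d2 : G.dist w v = 1 := SimpleGraph.dist_eq_one_iff_adj.mpr hwv
  have d1' : G.dist w u = 1 := SimpleGraph.dist_eq_one_iff_adj.mpr huw.symm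
  have d2' : G.dist v w = 1 := SimpleGraph.dist_eq_one_iff_adj.mpr hwv.symm
  have hd' : G.dist v u = 2 := by rw [SimpleGraph.dist_comm, hd]
  have huniv : (Finset.univ : Finset V) = {u, w, v} := by
    symm
    apply Finset.eq_univ_of_card
    rw [hcard, Finset.card_eq_three]
    exact ⟨u, w, v, huw.ne, huv, hwv.ne, rfl⟩
  set hA := isHermitian_distMatrix G
  have hmul : ∀ t, (G.dist t u : ℝ) * (hA.eigenvectorBasis i).ofLp u
      + ((G.dist t w : ℝ) * (hA.eigenvectorBasis i).ofLp w
      + (G.dist t v : ℝ) * (hA.eigenvectorBasis i).ofLp v)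
      = hA.eigenvalues i * (hA.eigenvectorBasis i).ofLp t := by
    intro t
    have h := congrFun (hA.mulVec_eigenvectorBasis i) t
    simpa [mulVec, dotProduct, distMatrix, huniv, Finset.sum_insert, huw.ne, huv, hwv.ne] using h
  have hu := hmul u
  have hw := hmul w
  have hv := hmul v
  simp only [d1, d2, d1', d2', hd, hd', SimpleGraph.dist_self,
    Nat.cast_zero, Nat.cast_one, Nat.cast_ofNat] at hu hw hv
  have hzero : ¬ ((hA.eigenvectorBasis i).ofLp u = 0 ∧ (hA.eigenvectorBasis i).ofLp w = 0 ∧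
      (hA.eigenvectorBasis i).ofLp v = 0) := by
    rintro ⟨h1, h2, h3⟩
    refine hA.eigenvectorBasis.orthonormal.ne_zero i ?_
    ext t
    have ht : t ∈ ({u, w, v} : Finset V) := huniv ▸ Finset.mem_univ t
    simp only [Finset.mem_insert, Finset.mem_singleton] at ht
    rcases ht with rfl | rfl | rfl <;> assumption
  constructor <;> intro h <;> rw [h] at hu hw hv <;>
    exact hzero ⟨by linarith, by linarith, by linarith⟩

open scoped Classical in
/-- In a non-increasing list with exactly two entries greater than `c`, these come first. -/
theorem List.lt_getD_one_and_getD_two_le_of_countP_eq_two {l : List ℝ} {c d : ℝ}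
    (hl : l.Pairwise (· ≥ ·)) (hlen : 3 ≤ l.length) (hc : l.countP (fun x => c < x) = 2) :
    c < l.getD 1 d ∧ l.getD 2 d ≤ c := by
  obtain _ | ⟨x, _ | ⟨y, _ | ⟨z, t⟩⟩⟩ := l
  all_goals simp only [List.length_cons, List.length_nil] at hlen
  all_goals try omega
  simp only [List.pairwise_cons, List.mem_cons, ge_iff_le, forall_eq_or_imp] at hl
  obtain ⟨⟨hyx, -⟩, ⟨hzy, hty⟩, -⟩ := hl
  simp only [List.getD_cons_succ, List.getD_cons_zero]
  simp only [List.countP_cons, decide_eq_true_eq] at hc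
  constructor
  · by_contra! hy
    have ht : t.countP (fun x => c < x) = 0 := by
      rw [List.countP_eq_zero]
      intro s hs
      simpa using (hty s hs).trans hy
    rw [ht, if_neg hy.not_gt, if_neg (hzy.trans hy).not_gt] at hc
    split_ifs at hc <;> omega
  · by_contra! hz
    rw [if_pos hz, if_pos (hz.trans_le hzy), if_pos (hz.trans_le (hzy.trans hyx))] at hc
    omega

/- **Statement 16.** Let `G` be a finite connected simple graph on `n` vertices having exactly
two distance eigenvalues (with multiplicity) different from `−1` and `−3`.  Then `G` is not
complete, `n ≥ 4`, `∂_3(G) ≤ −1`, `∂_n(G) ≥ −3`, and moreover `∂_2(G) > −1`, i.e. both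
distance eigenvalues different from `−1, −3` are strictly greater than `−1`. -/
open scoped Classical in
theorem exactly_two_distEigs_ne_neg_one_neg_three
    {V : Type*} [Fintype V] [DecidableEq V] (G : SimpleGraph V) (hG : G.Connected)
    (h2 : ((distEigs G).filter fun x => x ≠ -1 ∧ x ≠ -3).card = 2) :
    G ≠ ⊤ ∧ 4 ≤ Fintype.card V ∧
      (sortedDistEigs G).getD 2 0 ≤ -1 ∧
      -3 ≤ (sortedDistEigs G).getD (Fintype.card V - 1) 0 ∧
      -1 < (sortedDistEigs G).getD 1 0 ∧
      ∀ x ∈ (distEigs G).filter fun x => x ≠ -1 ∧ x ≠ -3, -1 < x := by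
  set ev := (isHermitian_distMatrix G).eigenvalues with hev
  have hF : (Finset.univ.filter fun i => ev i ≠ -1 ∧ ev i ≠ -3).card = 2 := by
    rw [distEigs_eq_map_eigenvalues, Multiset.filter_map, Multiset.card_map] at h2
    exact h2
  have htop : G ≠ ⊤ := by
    rintro rfl
    obtain ⟨i, j, hij, hFij⟩ := Finset.card_eq_two.mp hF
    have hi : i ∈ Finset.univ.filter fun i => ev i ≠ -1 ∧ ev i ≠ -3 := by simp [hFij]
    have hj : j ∈ Finset.univ.filter fun i => ev i ≠ -1 ∧ ev i ≠ -3 := by simp [hFij]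
    exact (Finset.mem_filter.mp hj).2.1
      (distMatrix_top_eigenvalues_eq hij (Finset.mem_filter.mp hi).2.1)
  obtain ⟨i, j, hij, hi, hj⟩ := exists_two_distMatrix_eigenvalues_gt_neg_one hG htop
  have hpair : ({i, j} : Finset V) = Finset.univ.filter fun i => ev i ≠ -1 ∧ ev i ≠ -3 := by
    apply Finset.eq_of_subset_of_card_le
    · intro k hk
      simp only [Finset.mem_insert, Finset.mem_singleton] at hk
      have hk' : -1 < ev k := by rcases hk with rfl | rfl <;> assumption
      simp only [Finset.mem_filter, Finset.mem_univ, true_and]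
      exact ⟨hk'.ne', by linarith⟩
    · rw [hF, Finset.card_pair hij]
  have hlt : ∀ k, ev k ≠ -1 → ev k ≠ -3 → -1 < ev k := by
    intro k h1 h3
    have hk : k ∈ ({i, j} : Finset V) := by simp [hpair, h1, h3]
    simp only [Finset.mem_insert, Finset.mem_singleton] at hk
    rcases hk with rfl | rfl <;> assumption
  have hcard3 : 3 ≤ Fintype.card V := by
    obtain ⟨u, w, v, huw, hwv, huv, -⟩ := hG.exists_adj_adj_dist_eq_two htop
    rw [← Finset.card_eq_three.mpr ⟨u, w, v, huw.ne, huv, hwv.ne, rfl⟩]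
    exact Finset.card_le_univ _
  have hcard : 4 ≤ Fintype.card V := by
    refine Nat.lt_of_le_of_ne hcard3 fun h => ?_
    rw [Finset.filter_true_of_mem fun k _ =>
      distMatrix_eigenvalues_ne_of_card_eq_three hG htop h.symm k, Finset.card_univ] at hF
    omega
  have hmem : ∀ x, x ∈ distEigs G ↔ ∃ k, ev k = x := by
    simp [distEigs_eq_map_eigenvalues, hev]
  have hlen : (sortedDistEigs G).length = Fintype.card V := by
    simp [sortedDistEigs, distEigs_eq_map_eigenvalues]
  have hcount : (sortedDistEigs G).countP (fun x => -1 < x) = 2 := by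
    rw [sortedDistEigs, List.countP_reverse, ← Multiset.coe_countP, Multiset.sort_eq,
      Multiset.countP_eq_card_filter, ← h2]
    congr 1
    refine Multiset.filter_congr fun x hx => ?_
    obtain ⟨k, rfl⟩ := (hmem x).mp hx
    exact ⟨fun h => ⟨h.ne', by linarith⟩, fun h => hlt k h.1 h.2⟩
  have hsorted : (sortedDistEigs G).Pairwise (· ≥ ·) := by
    rw [sortedDistEigs, List.pairwise_reverse]
    exact Multiset.pairwise_sort _ _
  obtain ⟨hone, htwo⟩ := List.lt_getD_one_and_getD_two_le_of_countP_eq_two (d := 0) hsorted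
    (by omega) hcount
  refine ⟨htop, hcard, htwo, ?_, hone, ?_⟩
  · have hlast : (sortedDistEigs G).getD (Fintype.card V - 1) 0 ∈ sortedDistEigs G := by
      rw [List.getD_eq_getElem _ _ (by omega)]
      exact List.getElem_mem _
    generalize (sortedDistEigs G).getD (Fintype.card V - 1) 0 = x at hlast
    rw [sortedDistEigs, List.mem_reverse, Multiset.mem_sort, hmem] at hlast
    obtain ⟨k, rfl⟩ := hlast
    by_contra! h
    linarith [hlt k (by linarith) h.ne]
  · intro x hx
    obtain ⟨hx, h1, h3⟩ := Multiset.mem_filter.mp hx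
    obtain ⟨k, rfl⟩ := (hmem x).mp hx
    exact hlt k h1 h3
end

section
/- Every finite connected simple graph with exactly two distance eigenvalues (counted with multiplicity) different from −1 and −3 is determined by its distance spectrum: if G has exactly two distance eigenvalues different from −1 and −3 and H is any finite connected simple graph whose distance spectrum (the multiset of eigenvalues of its distance matrix) equals that of G, then H is isomorphic to G. -/
namespace DistanceSpectrum

open Matrix

section Spectral

variable {V : Type*} [Fintype V] [DecidableEq V]

/-- Orthogonal diagonalization of a real symmetric matrix, with the diagonal entries listing the
roots of the characteristic polynomial. -/
lemma exists_orthogonal_diagonalization {A : Matrix V V ℝ} (hA : A.IsHermitian) :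
    ∃ (U : Matrix V V ℝ) (d : V → ℝ), Uᵀ * U = 1 ∧ U * Uᵀ = 1 ∧ A = U * diagonal d * Uᵀ ∧
      A.charpoly.roots = Finset.univ.val.map d := by
  refine ⟨hA.eigenvectorUnitary, hA.eigenvalues, ?_, ?_, ?_, ?_⟩
  · have h := (Unitary.mem_iff.mp hA.eigenvectorUnitary.2).1
    rwa [star_eq_conjTranspose, conjTranspose_eq_transpose_of_trivial] at h
  · have h := (Unitary.mem_iff.mp hA.eigenvectorUnitary.2).2
    rwa [star_eq_conjTranspose, conjTranspose_eq_transpose_of_trivial] at h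
  · have h := hA.spectral_theorem
    rw [Unitary.conjStarAlgAut_apply, star_eq_conjTranspose,
      conjTranspose_eq_transpose_of_trivial] at h
    exact h
  · exact hA.roots_charpoly_eq_eigenvalues

lemma sum_sq_roots_charpoly {A : Matrix V V ℝ} (hA : A.IsHermitian) :
    (A.charpoly.roots.map fun t => t ^ 2).sum = (A * A).trace := by
  obtain ⟨U, d, hU, -, hAd, hroots⟩ := exists_orthogonal_diagonalization hA
  have h : A * A = U * (diagonal d * diagonal d) * Uᵀ := by
    rw [hAd]
    calc U * diagonal d * Uᵀ * (U * diagonal d * Uᵀ)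
        = U * diagonal d * (Uᵀ * U) * diagonal d * Uᵀ := by simp only [Matrix.mul_assoc]
      _ = _ := by rw [hU]; simp only [Matrix.mul_assoc, Matrix.mul_one]
  rw [h, trace_mul_comm, ← Matrix.mul_assoc, hU, Matrix.one_mul, diagonal_mul_diagonal,
    trace_diagonal, hroots, Multiset.map_map]
  exact Finset.sum_congr rfl fun i _ => by simp [sq]

lemma rank_add_one_eq_countP {A : Matrix V V ℝ} (hA : A.IsHermitian) :
    (A + 1).rank = A.charpoly.roots.countP (· ≠ -1) := by
  obtain ⟨U, d, hU, hU', hAd, hroots⟩ := exists_orthogonal_diagonalization hA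
  have h : A + 1 = U * diagonal (fun i => d i + 1) * Uᵀ := by
    have : diagonal (fun i => d i + 1) = diagonal d + (1 : Matrix V V ℝ) := by
      rw [← diagonal_one, diagonal_add]
    rw [this, Matrix.mul_add, Matrix.add_mul, Matrix.mul_one, hU', ← hAd]
  have hdet : IsUnit U.det := (isUnit_iff_isUnit_det U).mp (IsUnit.of_mul_eq_one _ hU')
  have hdet' : IsUnit Uᵀ.det := by rwa [det_transpose]
  rw [h, rank_mul_eq_left_of_isUnit_det _ _ hdet', rank_mul_eq_right_of_isUnit_det _ _ hdet,
    rank_diagonal, hroots, Multiset.countP_map, Fintype.card_subtype]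
  refine congrArg Multiset.card (Multiset.filter_congr fun i _ => ?_)
  rw [ne_eq, ne_eq, add_eq_zero_iff_eq_neg]

/-- If all but two eigenvalues of a symmetric matrix `A` are `-1` or `-3`, then on the orthogonal
complement of two vectors `A + 1` is negative semidefinite and annihilated by `t (t + 2)`.
Moreover `A + 3` is positive semidefinite unless one vector already suffices for the
negativity. -/
lemma exists_two_vectors {A : Matrix V V ℝ} (hA : A.IsHermitian)
    (h2 : A.charpoly.roots.countP (fun t => t ≠ -1 ∧ t ≠ -3) = 2) :
    ∃ v w : V → ℝ,
      (∀ x, v ⬝ᵥ x = 0 → w ⬝ᵥ x = 0 → x ⬝ᵥ ((A + 1) *ᵥ x) ≤ 0 ∧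
        (A + 1) *ᵥ ((A + 1) *ᵥ x + (2 : ℝ) • x) = 0) ∧
      ((∀ x, 0 ≤ x ⬝ᵥ ((A + 1) *ᵥ x) + 2 * (x ⬝ᵥ x)) ∨
        ∀ x, v ⬝ᵥ x = 0 → x ⬝ᵥ ((A + 1) *ᵥ x) ≤ 0) := by
  obtain ⟨U, d, hU, hU', hAd, hroots⟩ := exists_orthogonal_diagonalization hA
  have hM : A + 1 = U * diagonal (fun i => d i + 1) * Uᵀ := by
    have : diagonal (fun i => d i + 1) = diagonal d + (1 : Matrix V V ℝ) := by
      rw [← diagonal_one, diagonal_add]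
    rw [this, Matrix.mul_add, Matrix.add_mul, Matrix.mul_one, hU', ← hAd]
  have hmul : ∀ x, (A + 1) *ᵥ x = U *ᵥ fun i => (d i + 1) * (Uᵀ *ᵥ x) i := fun x => by
    rw [hM, ← mulVec_mulVec, ← mulVec_mulVec]
    congr 1; ext i; rw [mulVec_diagonal]
  have hquad : ∀ x, x ⬝ᵥ ((A + 1) *ᵥ x) = ∑ i, (d i + 1) * (Uᵀ *ᵥ x) i ^ 2 := fun x => by
    rw [hmul, dotProduct_mulVec, ← mulVec_transpose]
    exact Finset.sum_congr rfl fun i _ => by ring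
  have hnorm : ∀ x, x ⬝ᵥ x = ∑ i, (Uᵀ *ᵥ x) i ^ 2 := fun x => by
    have : x ⬝ᵥ x = x ⬝ᵥ (U *ᵥ (Uᵀ *ᵥ x)) := by rw [mulVec_mulVec, hU', one_mulVec]
    rw [this, dotProduct_mulVec, ← mulVec_transpose]
    exact Finset.sum_congr rfl fun i _ => by ring
  rw [hroots, Multiset.countP_map] at h2
  obtain ⟨i, j, -, hij⟩ := Finset.card_eq_two.mp
    (show (Finset.univ.filter fun i => d i ≠ -1 ∧ d i ≠ -3).card = 2 from h2)
  have hrest : ∀ t, t ≠ i → t ≠ j → d t = -1 ∨ d t = -3 := fun t hi hj => by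
    by_contra! hne
    have : t ∈ ({i, j} : Finset V) := hij ▸ Finset.mem_filter.mpr ⟨Finset.mem_univ _, hne⟩
    simp [hi, hj] at this
  have hcol : ∀ t x, U.col t ⬝ᵥ x = (Uᵀ *ᵥ x) t := fun t x => rfl
  have key : ∀ i j : V, (∀ t, t ≠ i → t ≠ j → d t = -1 ∨ d t = -3) →
      ∀ x, U.col i ⬝ᵥ x = 0 → U.col j ⬝ᵥ x = 0 → x ⬝ᵥ ((A + 1) *ᵥ x) ≤ 0 ∧
        (A + 1) *ᵥ ((A + 1) *ᵥ x + (2 : ℝ) • x) = 0 := by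
    intro i j hrest x hi hj
    rw [hcol] at hi hj
    constructor
    · rw [hquad]
      refine Finset.sum_nonpos fun t _ => ?_
      rcases eq_or_ne t i with rfl | hti
      · simp [hi]
      rcases eq_or_ne t j with rfl | htj
      · simp [hj]
      rcases hrest t hti htj with h | h <;> rw [h] <;> nlinarith [sq_nonneg ((Uᵀ *ᵥ x) t)]
    · rw [hmul ((A + 1) *ᵥ x + (2 : ℝ) • x)]
      refine (congrArg (U *ᵥ ·) (funext fun t => ?_)).trans (mulVec_zero U)
      rw [mulVec_add, mulVec_smul, hmul, mulVec_mulVec, hU, one_mulVec]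
      simp only [Pi.add_apply, Pi.smul_apply, smul_eq_mul, Pi.zero_apply]
      rcases eq_or_ne t i with rfl | hti
      · simp [hi]
      rcases eq_or_ne t j with rfl | htj
      · simp [hj]
      rcases hrest t hti htj with h | h <;> rw [h] <;> ring
  have small : ∀ i j : V, (∀ t, t ≠ i → t ≠ j → d t = -1 ∨ d t = -3) → d j < -3 →
      ∀ x, U.col i ⬝ᵥ x = 0 → x ⬝ᵥ ((A + 1) *ᵥ x) ≤ 0 := by
    intro i j hrest hdj x hi
    rw [hcol] at hi
    rw [hquad]
    refine Finset.sum_nonpos fun t _ => ?_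
    rcases eq_or_ne t i with rfl | hti
    · simp [hi]
    rcases eq_or_ne t j with rfl | htj
    · exact mul_nonpos_of_nonpos_of_nonneg (by linarith) (sq_nonneg _)
    rcases hrest t hti htj with h | h <;> rw [h] <;> nlinarith [sq_nonneg ((Uᵀ *ᵥ x) t)]
  have hrest' : ∀ t, t ≠ j → t ≠ i → d t = -1 ∨ d t = -3 := fun t hj hi => hrest t hi hj
  rcases lt_or_ge (d j) (-3) with hj | hj
  · exact ⟨U.col i, U.col j, key i j hrest, Or.inr (small i j hrest hj)⟩
  rcases lt_or_ge (d i) (-3) with hi | hi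
  · exact ⟨U.col j, U.col i, key j i hrest', Or.inr (small j i hrest' hi)⟩
  refine ⟨U.col i, U.col j, key i j hrest, Or.inl fun x => ?_⟩
  rw [hquad, hnorm, Finset.mul_sum, ← Finset.sum_add_distrib]
  refine Finset.sum_nonneg fun t _ => ?_
  have hdt : -3 ≤ d t := by
    rcases eq_or_ne t i with rfl | hti
    · exact hi
    rcases eq_or_ne t j with rfl | htj
    · exact hj
    rcases hrest t hti htj with h | h <;> simp [h]
  nlinarith [sq_nonneg ((Uᵀ *ᵥ x) t)]

end Spectral

section Certificates

lemma exists_ne_zero_mulVec_eq_zero {V : Type*} [Fintype V] {r m : ℕ} (hrm : r < m)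
    (L : Matrix (Fin r) V ℝ) (Y : Matrix V (Fin m) ℝ) :
    ∃ c : Fin m → ℝ, c ≠ 0 ∧ L *ᵥ (Y *ᵥ c) = 0 := by
  have h : ((L * Y).mulVecLin).ker ≠ ⊥ :=
    LinearMap.ker_ne_bot_of_finrank_lt (by simpa using hrm)
  obtain ⟨c, hc, hc0⟩ := Submodule.exists_mem_ne_zero_of_ne_bot h
  exact ⟨c, hc0, by simpa [mulVec_mulVec] using hc⟩

variable {V : Type*} [Fintype V] [DecidableEq V]

/-- A positive definite compression of size `m` is incompatible with being negative semidefinite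
on the orthogonal complement of fewer than `m` vectors. -/
lemma false_of_gram_eq_one {M : Matrix V V ℝ} {r m s : ℕ} (hrm : r < m)
    (L : Matrix (Fin r) V ℝ) (hL : ∀ x, L *ᵥ x = 0 → x ⬝ᵥ (M *ᵥ x) ≤ 0)
    (f : Fin s → V) (K : Matrix (Fin s) (Fin s) ℤ) (hK : ∀ i j, M (f i) (f j) = K i j)
    (X : Matrix (Fin m) (Fin s) ℤ) (hX : X * K * Xᵀ = 1) : False := by
  set XR : Matrix (Fin m) (Fin s) ℝ := X.map (Int.castRingHom ℝ)
  set F : Matrix V (Fin s) ℝ := (1 : Matrix V V ℝ).submatrix id f with hF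
  have hsub : Fᵀ * M * F = K.map (Int.castRingHom ℝ) := by
    ext i j
    simp [hF, Matrix.mul_apply, Matrix.one_apply, hK]
  have hgram : (F * XRᵀ)ᵀ * M * (F * XRᵀ) = 1 := by
    calc (F * XRᵀ)ᵀ * M * (F * XRᵀ) = XR * (Fᵀ * M * F) * XRᵀ := by
          simp only [transpose_mul, transpose_transpose, Matrix.mul_assoc]
      _ = (X * K * Xᵀ).map (Int.castRingHom ℝ) := by
          rw [hsub, Matrix.map_mul, Matrix.map_mul, transpose_map]
      _ = 1 := by rw [hX]; simp
  obtain ⟨c, hc0, hc⟩ := exists_ne_zero_mulVec_eq_zero hrm L (F * XRᵀ)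
  generalize F * XRᵀ = Y at hgram hc
  have hMt : c ⬝ᵥ ((Yᵀ * M * Y) *ᵥ c) ≤ 0 := by
    rw [Matrix.mul_assoc, ← mulVec_mulVec, ← mulVec_mulVec, dotProduct_mulVec, vecMul_transpose]
    exact hL _ hc
  rw [hgram, one_mulVec] at hMt
  exact hc0 (dotProduct_self_eq_zero.mp (le_antisymm hMt
    (Finset.sum_nonneg fun i _ => mul_self_nonneg _)))

end Certificates

section Forbidden

lemma isHermitian_distMatrix {V : Type*} [Fintype V] (G : SimpleGraph V) :
    (distMatrix G).IsHermitian := by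
  ext u v
  simp [distMatrix, SimpleGraph.dist_comm]

variable {V : Type*} [Fintype V] [DecidableEq V] {G : SimpleGraph V}

lemma distMatrix_add_one_apply (u v : V) :
    (distMatrix G + 1) u v = G.dist u v + if u = v then 1 else 0 := by
  simp [distMatrix, Matrix.one_apply]

/-- All but exactly two distance eigenvalues are `-1` or `-3`. -/
def TwoExceptional (G : SimpleGraph V) : Prop :=
  (distEigs G).countP (fun t => t ≠ -1 ∧ t ≠ -3) = 2

lemma TwoExceptional.false_of_gram_eq_one (hG : TwoExceptional G) {s : ℕ}
    (f : Fin s → V) (K : Matrix (Fin s) (Fin s) ℤ)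
    (hK : ∀ i j, (distMatrix G + 1) (f i) (f j) = K i j)
    (X : Matrix (Fin 3) (Fin s) ℤ) (hX : X * K * Xᵀ = 1) : False := by
  obtain ⟨v, w, h, -⟩ := exists_two_vectors (isHermitian_distMatrix G) hG
  refine DistanceSpectrum.false_of_gram_eq_one (by norm_num : 2 < 3) ![v, w] (fun x hx => ?_)
    f K hK X hX
  exact (h x (congrFun hx 0) (congrFun hx 1)).1

/-- A vertex pair at distance two forces both exceptional eigenvalues above `-1`, so that the
smallest distance eigenvalue is at least `-3`. -/
lemma TwoExceptional.add_three_nonneg (hG : TwoExceptional G) {a b c : V}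
    (hab : G.Adj a b) (hbc : G.Adj b c) (hac : G.dist a c = 2) (x : V → ℝ) :
    0 ≤ x ⬝ᵥ ((distMatrix G + 1) *ᵥ x) + 2 * (x ⬝ᵥ x) := by
  obtain ⟨v, w, -, h | h⟩ := exists_two_vectors (isHermitian_distMatrix G) hG
  · exact h x
  · have hne : a ≠ c := by rintro rfl; simp at hac
    exfalso
    refine DistanceSpectrum.false_of_gram_eq_one (by norm_num : 1 < 2) ![v]
      (fun x hx => h x (congrFun hx 0)) ![a, b, c] !![1, 1, 2; 1, 1, 1; 2, 1, 1] ?_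
      !![1, 0, 0; 0, -2, 1] (by decide)
    intro i j
    have e1 := SimpleGraph.dist_eq_one_iff_adj.mpr hab
    have e2 := SimpleGraph.dist_eq_one_iff_adj.mpr hbc
    rw [distMatrix_add_one_apply]
    fin_cases i <;> fin_cases j <;>
      simp [e1, e2, hac, hab.ne, hbc.ne, hne, hab.ne', hbc.ne', hne.symm,
        G.dist_comm (u := b) (v := a), G.dist_comm (u := c) (v := b),
        G.dist_comm (u := c) (v := a)]

lemma TwoExceptional.false_of_dist_eq_three (hG : TwoExceptional G) {a b c d : V}
    (hab : G.Adj a b) (hbc : G.Adj b c) (hcd : G.Adj c d) (hac : G.dist a c = 2)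
    (hbd : G.dist b d = 2) (had : G.dist a d = 3) : False := by
  have e1 := SimpleGraph.dist_eq_one_iff_adj.mpr hab
  have e2 := SimpleGraph.dist_eq_one_iff_adj.mpr hbc
  have e3 := SimpleGraph.dist_eq_one_iff_adj.mpr hcd
  have nac : a ≠ c := by rintro rfl; simp at hac
  have nbd : b ≠ d := by rintro rfl; simp at hbd
  have nad : a ≠ d := by rintro rfl; simp at had
  have h := hG.add_three_nonneg hab hbc hac
    (-2 • Pi.single a 1 + -2 • Pi.single b 1 + Pi.single c 1 + 2 • Pi.single d 1)
  simp only [mulVec_add, mulVec_smul, add_dotProduct, dotProduct_add, smul_dotProduct,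
    dotProduct_smul, single_one_dotProduct, mulVec_single_one, col_apply,
    distMatrix_add_one_apply, Pi.single_apply] at h
  simp [e1, e2, e3, hac, hbd, had, hab.ne, hbc.ne, hcd.ne, nac, nbd, nad, hab.ne', hbc.ne',
    hcd.ne', nac.symm, nbd.symm, nad.symm, G.dist_comm (u := b) (v := a),
    G.dist_comm (u := c) (v := b), G.dist_comm (u := d) (v := c), G.dist_comm (u := c) (v := a),
    G.dist_comm (u := d) (v := b), G.dist_comm (u := d) (v := a)] at h
  norm_num at h

lemma TwoExceptional.dist_le_two (hG : TwoExceptional G) (hconn : G.Connected) (u v : V) :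
    G.dist u v ≤ 2 := by
  by_contra! hlt
  obtain ⟨p, hp⟩ := hconn.exists_walk_length_eq_dist u v
  match p, hp with
  | .nil, _ => simp at hlt
  | .cons _ .nil, hp => simp at hp; omega
  | .cons _ (.cons _ .nil), hp => simp at hp; omega
  | .cons (v := a) h1 (.cons (v := b) h2 (.cons (v := c) h3 p)), hp =>
    simp only [SimpleGraph.Walk.length_cons] at hp
    have e1 := SimpleGraph.dist_eq_one_iff_adj.mpr h1
    have e2 := SimpleGraph.dist_eq_one_iff_adj.mpr h2
    have e3 := SimpleGraph.dist_eq_one_iff_adj.mpr h3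
    have hp' := SimpleGraph.dist_le p
    have t1 := hconn.dist_triangle (u := u) (v := a) (w := b)
    have t2 := hconn.dist_triangle (u := u) (v := b) (w := c)
    have t3 := hconn.dist_triangle (u := a) (v := b) (w := c)
    have t4 := hconn.dist_triangle (u := u) (v := a) (w := c)
    have t5 := hconn.dist_triangle (u := u) (v := c) (w := v)
    exact hG.false_of_dist_eq_three h1 h2 h3 (by omega) (by omega) (by omega)

end Forbidden

section Structure

variable {V : Type*} [Fintype V] [DecidableEq V] {G : SimpleGraph V}

lemma TwoExceptional.exists_common_adj (hG : TwoExceptional G) (hconn : G.Connected) {u v : V}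
    (h : Gᶜ.Adj u v) : ∃ w, G.Adj u w ∧ G.Adj w v := by
  obtain ⟨p, hp⟩ := hconn.exists_walk_length_eq_dist u v
  have hle := hG.dist_le_two hconn u v
  match p, hp with
  | .nil, _ => simp at h
  | .cons h1 .nil, _ => simp [h1] at h
  | .cons h1 (.cons h2 .nil), _ => exact ⟨_, h1, h2⟩
  | .cons _ (.cons _ (.cons _ p)), hp => simp at hp; omega

lemma TwoExceptional.distMatrix_add_one_apply_eq_two (hG : TwoExceptional G)
    (hconn : G.Connected) {u v : V} (h : Gᶜ.Adj u v) : (distMatrix G + 1) u v = 2 := by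
  obtain ⟨huv, hadj⟩ := (SimpleGraph.compl_adj G u v).mp h
  have h0 := (hconn.dist_eq_zero_iff (u := u) (v := v)).not.mpr huv
  have h1 := (SimpleGraph.dist_eq_one_iff_adj (G := G)).not.mpr hadj
  have h2 := hG.dist_le_two hconn u v
  rw [distMatrix_add_one_apply, show G.dist u v = 2 by omega]
  simp [huv]

lemma distMatrix_add_one_apply_eq_one {u v : V} (h : u = v ∨ G.Adj u v) :
    (distMatrix G + 1) u v = 1 := by
  rw [distMatrix_add_one_apply]
  rcases h with rfl | h
  · simp
  · simp [h.ne, SimpleGraph.dist_eq_one_iff_adj.mpr h]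

/-- A graph on five vertices for which `D + 1` has a three-dimensional positive definite
compression does not occur as an induced subgraph. -/
lemma TwoExceptional.false_of_five (hG : TwoExceptional G) (hconn : G.Connected) (f : Fin 5 → V)
    (K : Matrix (Fin 5) (Fin 5) ℤ) (hsymm : Kᵀ = K) (hdiag : ∀ i, K i i = 1)
    (hK : ∀ i j, i < j → K i j = 1 ∧ G.Adj (f i) (f j) ∨ K i j = 2 ∧ Gᶜ.Adj (f i) (f j))
    (X : Matrix (Fin 3) (Fin 5) ℤ) (hX : X * K * Xᵀ = 1) : False := by
  have hlt : ∀ i j, i < j → (distMatrix G + 1) (f i) (f j) = K i j := by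
    intro i j hij
    rcases hK i j hij with ⟨h, hadj⟩ | ⟨h, hadj⟩
    · rw [h, distMatrix_add_one_apply_eq_one (.inr hadj), Int.cast_one]
    · rw [h, hG.distMatrix_add_one_apply_eq_two hconn hadj, Int.cast_ofNat]
  have hD : (distMatrix G + 1)ᵀ = distMatrix G + 1 := (isHermitian_distMatrix G).add isHermitian_one
  refine hG.false_of_gram_eq_one f K (fun i j => ?_) X hX
  rcases lt_trichotomy i j with h | rfl | h
  · exact hlt i j h
  · rw [hdiag, distMatrix_add_one_apply_eq_one (.inl rfl), Int.cast_one]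
  · rw [← hD, ← hsymm]
    exact hlt j i h

lemma TwoExceptional.false_of_pentagon (hG : TwoExceptional G) (hconn : G.Connected)
    {a b c d e : V} (hab : G.Adj a b) (hac : Gᶜ.Adj a c) (had : Gᶜ.Adj a d) (hae : G.Adj a e)
    (hbc : G.Adj b c) (hbd : Gᶜ.Adj b d) (hbe : Gᶜ.Adj b e) (hcd : G.Adj c d)
    (hce : Gᶜ.Adj c e) (hde : G.Adj d e) : False := by
  refine hG.false_of_five hconn ![a, b, c, d, e]
    !![1, 1, 2, 2, 1; 1, 1, 1, 2, 2; 2, 1, 1, 1, 2; 2, 2, 1, 1, 1; 1, 2, 2, 1, 1]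
    (by decide) (by decide) ?_
    !![0, 0, 0, 0, 1; 0, 0, 1, -2, 0; 1, -1, 0, 1, 0] (by decide)
  intro i j hij
  fin_cases i <;> fin_cases j <;> first | (exact absurd hij (by decide)) | simp [*]

lemma TwoExceptional.false_of_house (hG : TwoExceptional G) (hconn : G.Connected)
    {a b c d e : V} (hab : G.Adj a b) (hac : Gᶜ.Adj a c) (had : Gᶜ.Adj a d) (hae : G.Adj a e)
    (hbc : G.Adj b c) (hbd : Gᶜ.Adj b d) (hbe : G.Adj b e) (hcd : G.Adj c d)
    (hce : Gᶜ.Adj c e) (hde : G.Adj d e) : False := by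
  refine hG.false_of_five hconn ![a, b, c, d, e]
    !![1, 1, 2, 2, 1; 1, 1, 1, 2, 1; 2, 1, 1, 1, 2; 2, 2, 1, 1, 1; 1, 1, 2, 1, 1]
    (by decide) (by decide) ?_
    !![0, 0, 0, 0, 1; 1, 0, -1, 1, 0; 2, -2, 1, 0, -2] (by decide)
  intro i j hij
  fin_cases i <;> fin_cases j <;> first | (exact absurd hij (by decide)) | simp [*]

lemma TwoExceptional.false_of_gem (hG : TwoExceptional G) (hconn : G.Connected)
    {a b c d e : V} (hab : G.Adj a b) (hac : Gᶜ.Adj a c) (had : Gᶜ.Adj a d) (hae : G.Adj a e)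
    (hbc : G.Adj b c) (hbd : Gᶜ.Adj b d) (hbe : G.Adj b e) (hcd : G.Adj c d)
    (hce : G.Adj c e) (hde : G.Adj d e) : False := by
  refine hG.false_of_five hconn ![a, b, c, d, e]
    !![1, 1, 2, 2, 1; 1, 1, 1, 2, 1; 2, 1, 1, 1, 1; 2, 2, 1, 1, 1; 1, 1, 1, 1, 1]
    (by decide) (by decide) ?_
    !![0, 0, 0, 1, 0; 0, 1, -1, 0, -1; 1, 0, 0, 0, -2] (by decide)
  intro i j hij
  fin_cases i <;> fin_cases j <;> first | (exact absurd hij (by decide)) | simp [*]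

lemma TwoExceptional.false_of_kite (hG : TwoExceptional G) (hconn : G.Connected)
    {a b c d e : V} (hab : G.Adj a b) (hac : Gᶜ.Adj a c) (had : Gᶜ.Adj a d) (hae : G.Adj a e)
    (hbc : G.Adj b c) (hbd : Gᶜ.Adj b d) (hbe : G.Adj b e) (hcd : Gᶜ.Adj c d)
    (hce : G.Adj c e) (hde : G.Adj d e) : False := by
  refine hG.false_of_five hconn ![a, b, c, d, e]
    !![1, 1, 2, 2, 1; 1, 1, 1, 2, 1; 2, 1, 1, 2, 1; 2, 2, 2, 1, 1; 1, 1, 1, 1, 1]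
    (by decide) (by decide) ?_
    !![0, 0, 1, 0, 0; 0, 0, 0, 1, -2; 1, -2, 0, 0, 0] (by decide)
  intro i j hij
  fin_cases i <;> fin_cases j <;> first | (exact absurd hij (by decide)) | simp [*]

lemma TwoExceptional.false_of_wheel (hG : TwoExceptional G) (hconn : G.Connected)
    {a b c d e : V} (hab : G.Adj a b) (hac : Gᶜ.Adj a c) (had : G.Adj a d) (hae : G.Adj a e)
    (hbc : G.Adj b c) (hbd : Gᶜ.Adj b d) (hbe : G.Adj b e) (hcd : G.Adj c d)
    (hce : G.Adj c e) (hde : G.Adj d e) : False := by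
  refine hG.false_of_five hconn ![a, b, c, d, e]
    !![1, 1, 2, 1, 1; 1, 1, 1, 2, 1; 2, 1, 1, 1, 1; 1, 2, 1, 1, 1; 1, 1, 1, 1, 1]
    (by decide) (by decide) ?_
    !![0, 0, 0, 1, 0; 0, 1, -1, 0, -1; 1, 1, 0, 0, -3] (by decide)
  intro i j hij
  fin_cases i <;> fin_cases j <;> first | (exact absurd hij (by decide)) | simp [*]

lemma TwoExceptional.false_of_path (hG : TwoExceptional G) (hconn : G.Connected) {a b c d : V}
    (hab : G.Adj a b) (hbc : G.Adj b c) (hcd : G.Adj c d) (hac : ¬G.Adj a c)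
    (hbd : ¬G.Adj b d) (had : ¬G.Adj a d) : False := by
  have nac : Gᶜ.Adj a c := (SimpleGraph.compl_adj ..).mpr ⟨by rintro rfl; exact had hcd, hac⟩
  have nbd : Gᶜ.Adj b d := (SimpleGraph.compl_adj ..).mpr ⟨by rintro rfl; exact had hab, hbd⟩
  have nad : Gᶜ.Adj a d := (SimpleGraph.compl_adj ..).mpr ⟨by rintro rfl; exact hac hcd.symm, had⟩
  obtain ⟨e, hae, hed⟩ := hG.exists_common_adj hconn nad
  have nbe : b ≠ e := by rintro rfl; exact hbd hed
  have nce : c ≠ e := by rintro rfl; exact hac hae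
  by_cases hbe : G.Adj b e <;> by_cases hce : G.Adj c e
  · exact hG.false_of_gem hconn hab nac nad hae hbc nbd hbe hcd hce hed.symm
  · exact hG.false_of_house hconn hab nac nad hae hbc nbd hbe hcd
      ((SimpleGraph.compl_adj ..).mpr ⟨nce, hce⟩) hed.symm
  · exact hG.false_of_house hconn hcd.symm nbd.symm nad.symm hed.symm hbc.symm nac.symm hce
      hab.symm ((SimpleGraph.compl_adj ..).mpr ⟨nbe, hbe⟩) hae
  · exact hG.false_of_pentagon hconn hab nac nad hae hbc nbd
      ((SimpleGraph.compl_adj ..).mpr ⟨nbe, hbe⟩) hcd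
      ((SimpleGraph.compl_adj ..).mpr ⟨nce, hce⟩) hed.symm

/-- Relative to a nonadjacent pair `u`, `v`, every common neighbour is adjacent to every vertex
that is not a common neighbour. -/
lemma TwoExceptional.adj_of_common_of_not_common (hG : TwoExceptional G) (hconn : G.Connected)
    {u v : V} (huv : Gᶜ.Adj u v) {x y : V} (hx : ¬(G.Adj u x ∧ G.Adj v x))
    (hy : G.Adj u y ∧ G.Adj v y) : G.Adj x y := by
  by_contra hxy
  have hne : x ≠ y := by rintro rfl; exact hx hy
  have huv' := ((SimpleGraph.compl_adj ..).mp huv).2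
  have hux : u ≠ x := by rintro rfl; exact hxy hy.1
  have hvx : v ≠ x := by rintro rfl; exact hxy hy.2
  by_cases h1 : G.Adj u x
  · exact hG.false_of_path hconn h1.symm hy.1 hy.2.symm hxy huv' fun h => hx ⟨h1, h.symm⟩
  by_cases h2 : G.Adj v x
  · exact hG.false_of_path hconn h2.symm hy.2 hy.1.symm hxy (fun h => huv' h.symm)
      fun h => h1 h.symm
  obtain ⟨z, hxz, hzy⟩ := hG.exists_common_adj hconn
    ((SimpleGraph.compl_adj ..).mpr ⟨hne, hxy⟩)
  have hzu : G.Adj u z := by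
    by_contra h
    exact hG.false_of_path hconn hxz hzy hy.1.symm hxy (fun h' => h h'.symm) fun h' => h1 h'.symm
  have hzv : G.Adj v z := by
    by_contra h
    exact hG.false_of_path hconn hxz hzy hy.2.symm hxy (fun h' => h h'.symm) fun h' => h2 h'.symm
  exact hG.false_of_kite hconn hy.1 huv ((SimpleGraph.compl_adj ..).mpr ⟨hux, h1⟩) hzu
    hy.2.symm ((SimpleGraph.compl_adj ..).mpr ⟨hne.symm, fun h => hxy h.symm⟩) hzy.symm
    ((SimpleGraph.compl_adj ..).mpr ⟨hvx, h2⟩) hzv hxz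

lemma TwoExceptional.adj_trans_of_common (hG : TwoExceptional G) (hconn : G.Connected)
    {u v : V} (huv : Gᶜ.Adj u v) {x y z : V} (hx : G.Adj u x ∧ G.Adj v x)
    (hy : G.Adj u y ∧ G.Adj v y) (hz : G.Adj u z ∧ G.Adj v z) (hxy : G.Adj x y)
    (hyz : G.Adj y z) (hne : x ≠ z) : G.Adj x z := by
  by_contra hxz
  exact hG.false_of_wheel hconn hx.1.symm ((SimpleGraph.compl_adj ..).mpr ⟨hne, hxz⟩) hx.2.symm
    hxy hz.1 huv hy.1 hz.2.symm hyz.symm hy.2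

lemma TwoExceptional.adj_trans_of_not_common (hG : TwoExceptional G) (hconn : G.Connected)
    {u v : V} (huv : Gᶜ.Adj u v) {x y z : V} (hx : ¬(G.Adj u x ∧ G.Adj v x))
    (hy : ¬(G.Adj u y ∧ G.Adj v y)) (hz : ¬(G.Adj u z ∧ G.Adj v z)) (hxy : G.Adj x y)
    (hyz : G.Adj y z) (hne : x ≠ z) : G.Adj x z := by
  by_contra hxz
  obtain ⟨w, huw, hwv⟩ := hG.exists_common_adj hconn huv
  have hw : G.Adj u w ∧ G.Adj v w := ⟨huw, hwv.symm⟩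
  have hdom := fun {t} (ht : ¬(G.Adj u t ∧ G.Adj v t)) =>
    hG.adj_of_common_of_not_common hconn huv ht hw
  have nxz : Gᶜ.Adj x z := (SimpleGraph.compl_adj ..).mpr ⟨hne, hxz⟩
  obtain ⟨t, htw, nty⟩ : ∃ t, G.Adj t w ∧ Gᶜ.Adj t y := by
    obtain ⟨hne', hadj⟩ := (SimpleGraph.compl_adj ..).mp huv
    by_cases h : Gᶜ.Adj u y
    · exact ⟨u, huw, h⟩
    · refine ⟨v, hwv.symm, ?_⟩
      rw [SimpleGraph.compl_adj] at h ⊢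
      have hadj' : ¬G.Adj v u := fun h' => hadj h'.symm
      grind
  have hty := ((SimpleGraph.compl_adj ..).mp nty).2
  have htx : t ≠ x := by rintro rfl; exact hty hxy
  have htz : t ≠ z := by rintro rfl; exact hty hyz.symm
  by_cases h1 : G.Adj t x <;> by_cases h2 : G.Adj t z
  · exact hG.false_of_wheel hconn hxy nxz h1.symm (hdom hx) hyz nty.symm (hdom hy) h2.symm
      (hdom hz) htw
  · exact hG.false_of_path hconn h1 hxy hyz hty hxz h2
  · exact hG.false_of_path hconn h2 hyz.symm hxy.symm hty (fun h => hxz h.symm) h1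
  · exact hG.false_of_kite hconn hxy nxz
      ((SimpleGraph.compl_adj ..).mpr ⟨htx.symm, fun h => h1 h.symm⟩) (hdom hx) hyz nty.symm
      (hdom hy) ((SimpleGraph.compl_adj ..).mpr ⟨htz.symm, fun h => h2 h.symm⟩) (hdom hz) htw

end Structure

section CliqueJoin

variable {V : Type*} {G : SimpleGraph V}

/-- A presentation of `G` as the join of two disjoint unions of cliques: the fibres of `part` are
the cliques, and `side` tells which of the two joined graphs a clique belongs to. -/
structure CliqueJoin (G : SimpleGraph V) (P : Type*) where
  part : V → P
  side : P → Bool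
  surjective : Function.Surjective part
  adj_iff : ∀ x y, G.Adj x y ↔ x ≠ y ∧ (part x = part y ∨ side (part x) ≠ side (part y))

variable [Fintype V] [DecidableEq V]

lemma TwoExceptional.exists_compl_adj (hG : TwoExceptional G) : ∃ u v, Gᶜ.Adj u v := by
  by_contra! h
  have hJ : distMatrix G + 1 = vecMulVec 1 1 := by
    ext u v
    rw [distMatrix_add_one_apply_eq_one]
    · simp
    · have := h u v
      rw [SimpleGraph.compl_adj] at this
      tauto
  have hr := rank_add_one_eq_countP (isHermitian_distMatrix G)
  have hle : (distEigs G).countP (fun t => t ≠ -1 ∧ t ≠ -3) ≤ (distEigs G).countP (· ≠ -1) := by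
    simp only [Multiset.countP_eq_card_filter]
    exact Multiset.card_le_card (Multiset.monotone_filter_right _ fun _ h => h.1)
  have h1 : (distMatrix G + 1).rank ≤ 1 := hJ ▸ rank_vecMulVec_le _ _
  rw [hG, distEigs, ← hr] at hle
  omega

universe u

lemma TwoExceptional.exists_cliqueJoin {V : Type u} [Fintype V] [DecidableEq V]
    {G : SimpleGraph V} (hG : TwoExceptional G) (hconn : G.Connected) :
    ∃ (P : Type u) (_ : Fintype P) (_ : DecidableEq P) (C : CliqueJoin G P),
      (∃ i j, i ≠ j ∧ C.side i = C.side j) ∧ ∃ i j, C.side i ≠ C.side j := by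
  classical
  obtain ⟨u, v, huv⟩ := hG.exists_compl_adj
  obtain ⟨w, huw, hwv⟩ := hG.exists_common_adj hconn huv
  set c : V → Prop := fun x => G.Adj u x ∧ G.Adj v x with hc
  let r : Setoid V :=
    { r := fun x y => (c x ↔ c y) ∧ (x = y ∨ G.Adj x y)
      iseqv :=
        { refl := fun x => ⟨Iff.rfl, .inl rfl⟩
          symm := fun h => ⟨h.1.symm, h.2.imp Eq.symm SimpleGraph.Adj.symm⟩
          trans := by
            rintro x y z ⟨h1, rfl | h2⟩ ⟨h3, rfl | h4⟩
            · exact ⟨h1, .inl rfl⟩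
            · exact ⟨h3, .inr h4⟩
            · exact ⟨h1, .inr h2⟩
            · refine ⟨h1.trans h3, or_iff_not_imp_left.mpr fun hne => ?_⟩
              by_cases hy : c y
              · exact hG.adj_trans_of_common hconn huv (h1.mpr hy) hy (h3.mp hy) h2 h4 hne
              · exact hG.adj_trans_of_not_common hconn huv (mt h1.mp hy) hy (mt h3.mpr hy) h2 h4
                  hne } }
  let side : Quotient r → Bool := Quotient.lift (fun x => decide (c x))
    fun x y h => by simpa using h.1
  have hside : ∀ x y, side (Quotient.mk r x) = side (Quotient.mk r y) ↔ (c x ↔ c y) := by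
    intro x y
    simp [side]
  have hmk : ∀ x y, Quotient.mk r x = Quotient.mk r y ↔ (c x ↔ c y) ∧ (x = y ∨ G.Adj x y) :=
    fun x y => Quotient.eq
  have hcu : ¬c u := fun h => G.irrefl h.1
  have hcv : ¬c v := fun h => G.irrefl h.2
  have hcw : c w := ⟨huw, hwv.symm⟩
  have huv' := (SimpleGraph.compl_adj ..).mp huv
  refine ⟨Quotient r, inferInstance, inferInstance,
    ⟨Quotient.mk r, side, Quotient.mk_surjective, fun x y => ?_⟩,
    ⟨Quotient.mk r u, Quotient.mk r v, ?_, ?_⟩, ⟨Quotient.mk r u, Quotient.mk r w, ?_⟩⟩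
  · rw [ne_eq (side _), hside, hmk]
    constructor
    · intro h
      have := h.ne
      tauto
    · rintro ⟨hne, h | h⟩
      · tauto
      · by_cases hx : c x
        · exact (hG.adj_of_common_of_not_common hconn huv (by tauto) hx).symm
        · exact hG.adj_of_common_of_not_common hconn huv hx (by tauto)
  · rw [ne_eq, hmk]
    tauto
  · rw [hside]
    tauto
  · rw [ne_eq, hside]
    tauto

end CliqueJoin

section PartAlgebra

variable {V : Type*} {G : SimpleGraph V} {P : Type*} [DecidableEq P]

namespace CliqueJoin

variable (C : CliqueJoin G P)

/-- The common value of the entries of `D + 1` between two cliques. -/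
def core : Matrix P P ℝ :=
  of fun i j => 1 + (if C.side i = C.side j then 1 else 0) - if i = j then 1 else 0

/-- The core matrix is nonsingular as soon as both sides are nonempty and there are at least three
cliques. -/
lemma eq_zero_of_core_mulVec [Fintype P] (h1 : ∃ i j, i ≠ j ∧ C.side i = C.side j)
    (h2 : ∃ i j, C.side i ≠ C.side j) {z : P → ℝ} (hz : C.core *ᵥ z = 0) : z = 0 := by
  set N : Bool → ℕ := fun b => (Finset.univ.filter fun i => C.side i = b).card
  set S : Bool → ℝ := fun b => ∑ i with C.side i = b, z i with hS
  have hT : ∑ i, z i = S true + S false := by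
    rw [hS, ← Finset.sum_fiberwise Finset.univ C.side z, Fintype.sum_bool]
  have hq : ∀ q, z q = S true + S false + S (C.side q) := by
    intro q
    have := congrFun hz q
    simp only [mulVec, dotProduct, core, of_apply, Pi.zero_apply, sub_mul, add_mul, one_mul,
      ite_mul, zero_mul, Finset.sum_sub_distrib, Finset.sum_add_distrib, Finset.sum_ite_eq,
      Finset.mem_univ, if_true, hT, ← Finset.sum_filter] at this
    have e : ∑ i with C.side q = C.side i, z i = S (C.side q) := by simp only [hS, eq_comm]
    linarith
  have hSN : ∀ b, S b = N b * (S true + S false + S b) := by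
    intro b
    calc S b = ∑ i with C.side i = b, (S true + S false + S b) :=
          Finset.sum_congr rfl fun i hi => by rw [hq i, (Finset.mem_filter.mp hi).2]
      _ = _ := by simp only [Finset.sum_const, nsmul_eq_mul, N]
  have hpos : ∀ b, 1 ≤ N b := by
    intro b
    obtain ⟨i, j, hij⟩ := h2
    rw [Nat.one_le_iff_ne_zero, ← Nat.pos_iff_ne_zero, Finset.card_pos]
    by_cases h : C.side i = b
    · exact ⟨i, by simpa using h⟩
    · refine ⟨j, ?_⟩
      simp only [Finset.mem_filter_univ]
      revert h hij
      cases C.side i <;> cases C.side j <;> cases b <;> simp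
  have htwo : ∃ b, 2 ≤ N b := by
    obtain ⟨i, j, hij, h⟩ := h1
    exact ⟨C.side i, Finset.one_lt_card.mpr ⟨i, by simp, j, by simp [h], hij⟩⟩
  have hdet : (3 * N true * N false + 1 : ℝ) - 2 * N true - 2 * N false ≠ 0 := by
    have ht := hpos true
    have hf := hpos false
    have : 2 * N true + 2 * N false < 3 * N true * N false + 1 := by
      obtain ⟨b, hb⟩ := htwo
      cases b <;> nlinarith
    have : (2 * N true + 2 * N false : ℝ) < 3 * N true * N false + 1 := by exact_mod_cast this
    linarith
  have hSt := hSN true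
  have hSf := hSN false
  have h0 : S true = 0 := by
    refine (mul_eq_zero.mp ?_).resolve_left hdet
    linear_combination (1 - 2 * N false : ℝ) * hSt + N true * hSf
  have h0' : S false = 0 := by
    refine (mul_eq_zero.mp ?_).resolve_left hdet
    linear_combination (1 - 2 * N true : ℝ) * hSf + N false * hSt
  funext q
  rw [hq q]
  cases C.side q <;> simp only [h0, h0', add_zero, Pi.zero_apply]

variable [Fintype V]

/-- The number of vertices of a clique. -/
def size (i : P) : ℕ := Fintype.card {x // C.part x = i}

lemma size_pos (i : P) : 0 < C.size i :=
  Fintype.card_pos_iff.mpr <| (C.surjective i).elim fun x hx => ⟨⟨x, hx⟩⟩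

lemma sum_comp_part [Fintype P] (f : P → ℝ) : ∑ x, f (C.part x) = ∑ i, C.size i * f i := by
  rw [← Finset.sum_fiberwise' Finset.univ C.part f]
  simp [size, Fintype.card_subtype]

lemma sum_size [Fintype P] : ∑ i, C.size i = Fintype.card V := by
  have := C.sum_comp_part fun _ => 1
  simp only [mul_one, Finset.sum_const, Finset.card_univ, nsmul_eq_mul] at this
  exact_mod_cast this.symm

end CliqueJoin

variable [Fintype V] [DecidableEq V] (C : CliqueJoin G P)

lemma TwoExceptional.distMatrix_add_one_apply_eq_core (hG : TwoExceptional G)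
    (hconn : G.Connected) (x y : V) :
    (distMatrix G + 1) x y = C.core (C.part x) (C.part y) := by
  by_cases h : x = y ∨ G.Adj x y
  · rw [distMatrix_add_one_apply_eq_one h]
    rw [C.adj_iff] at h
    have : C.part x = C.part y ∨ C.side (C.part x) ≠ C.side (C.part y) := by
      rcases h with rfl | h
      · exact .inl rfl
      · exact h.2
    rcases this with h | h
    · simp [CliqueJoin.core, h]
    · simp [CliqueJoin.core, h, ne_of_apply_ne C.side h]
  · push Not at h
    rw [hG.distMatrix_add_one_apply_eq_two hconn ((SimpleGraph.compl_adj ..).mpr h)]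
    have h' := h.2
    rw [C.adj_iff] at h'
    push Not at h'
    obtain ⟨h3, h4⟩ := h' h.1
    simp [CliqueJoin.core, h3, h4]
    norm_num

variable [Fintype P]

lemma TwoExceptional.mulVec_comp_part (hG : TwoExceptional G) (hconn : G.Connected)
    (y : P → ℝ) :
    (distMatrix G + 1) *ᵥ (y ∘ C.part) = (C.core *ᵥ fun i => C.size i * y i) ∘ C.part := by
  funext x
  simp only [mulVec, dotProduct, hG.distMatrix_add_one_apply_eq_core C hconn, Function.comp]
  rw [C.sum_comp_part fun i => C.core (C.part x) i * y i]
  exact Finset.sum_congr rfl fun i _ => by ring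

/-- Any three cliques support a part-constant eigenvector of `D` for the eigenvalue `-3`. -/
lemma TwoExceptional.exists_eigenvector (hG : TwoExceptional G) (hconn : G.Connected)
    (h1 : ∃ i j, i ≠ j ∧ C.side i = C.side j) (h2 : ∃ i j, C.side i ≠ C.side j) {t : Fin 3 → P}
    (ht : Function.Injective t) :
    ∃ c : Fin 3 → ℝ, c ≠ 0 ∧ (∀ k, ∑ l, C.core (t k) (t l) * C.size (t l) * c l + 2 * c k = 0) ∧
      ∀ q, (∀ k, t k ≠ q) → ∑ l, C.core q (t l) * C.size (t l) * c l = 0 := by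
  obtain ⟨v, w, h, -⟩ := exists_two_vectors (isHermitian_distMatrix G) hG
  obtain ⟨c, hc0, hc⟩ := exists_ne_zero_mulVec_eq_zero (by norm_num : 2 < 3) (of ![v, w])
    (of fun x k => if C.part x = t k then 1 else 0)
  set y : P → ℝ := fun q => ∑ k, if q = t k then c k else 0 with hy
  have hYc : (of fun x k => if C.part x = t k then (1 : ℝ) else 0) *ᵥ c = y ∘ C.part := by
    funext x
    simp [mulVec, dotProduct, hy]
  rw [hYc] at hc
  obtain ⟨-, hMM⟩ := h _ (congrFun hc 0) (congrFun hc 1)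
  set z : P → ℝ := (C.core *ᵥ fun i => C.size i * y i) + (2 : ℝ) • y with hz
  have hzy : (distMatrix G + 1) *ᵥ (y ∘ C.part) + (2 : ℝ) • (y ∘ C.part) = z ∘ C.part := by
    rw [hG.mulVec_comp_part C hconn]
    rfl
  rw [hzy, hG.mulVec_comp_part C hconn] at hMM
  have hz0 : z = 0 := by
    have := C.eq_zero_of_core_mulVec h1 h2 (z := fun i => C.size i * z i) (by
      funext q
      obtain ⟨x, rfl⟩ := C.surjective q
      exact congrFun hMM x)
    funext q
    exact (mul_eq_zero.mp (congrFun this q)).resolve_left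
      (Nat.cast_ne_zero.mpr (C.size_pos q).ne')
  have hsum : ∀ q, ∑ l, C.core q (t l) * C.size (t l) * c l + 2 * y q = 0 := by
    intro q
    have := congrFun hz0 q
    simp only [hz, Pi.add_apply, Pi.smul_apply, smul_eq_mul, Pi.zero_apply, mulVec,
      dotProduct] at this
    rw [← this]
    congr 1
    simp only [hy, Finset.mul_sum]
    rw [Finset.sum_comm]
    refine Finset.sum_congr rfl fun k _ => ?_
    simp [mul_assoc]
  refine ⟨c, hc0, fun k => ?_, fun q hq => ?_⟩
  · have hyk : y (t k) = c k := by simp [hy, ht.eq_iff]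
    rw [← hsum (t k), hyk]
  · have hyq : y q = 0 := Finset.sum_eq_zero fun k _ => if_neg fun h => hq k h.symm
    rw [← hsum q, hyq, mul_zero, add_zero]

lemma TwoExceptional.rank_eq_card (hG : TwoExceptional G) (hconn : G.Connected)
    (h1 : ∃ i j, i ≠ j ∧ C.side i = C.side j) (h2 : ∃ i j, C.side i ≠ C.side j) :
    (distMatrix G + 1).rank = Fintype.card P := by
  have happ := hG.distMatrix_add_one_apply_eq_core C hconn
  apply le_antisymm
  · have : distMatrix G + 1 =
        (1 : Matrix P P ℝ).submatrix C.part id * C.core.submatrix id C.part := by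
      ext x y
      rw [happ]
      simp [Matrix.mul_apply, Matrix.one_apply]
    rw [this]
    exact (rank_mul_le_left _ _).trans (rank_le_card_width _)
  · have hunit : IsUnit C.core := by
      rw [← mulVec_injective_iff_isUnit]
      refine (injective_iff_map_eq_zero C.core.mulVecLin).mpr fun z hz => ?_
      exact C.eq_zero_of_core_mulVec h1 h2 hz
    rw [← rank_of_isUnit _ hunit]
    obtain ⟨s, hs⟩ := C.surjective.hasRightInverse
    have : C.core = (1 : Matrix V V ℝ).submatrix s id *
        ((distMatrix G + 1) * (1 : Matrix V V ℝ).submatrix id s) := by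
      ext i j
      simp only [Matrix.mul_apply, submatrix_apply, Matrix.one_apply, happ, id]
      simp [hs i, hs j]
    rw [this]
    exact (rank_mul_le_right _ _).trans (rank_mul_le_left _ _)

end PartAlgebra

section Classification

variable {V : Type*} [Fintype V] {G : SimpleGraph V} {P : Type*} [Fintype P] [DecidableEq P]

lemma size_dichotomy {p q s : ℕ} (hp : 0 < p) (hq : 0 < q) (hs : 0 < s)
    (h : 8 + 4 * (s + p + q) = 6 * p * q + s * p * q) :
    (p = 2 ∧ q = 2) ∨ (p = 1 ∧ q = 5 ∧ s = 2) ∨ (p = 5 ∧ q = 1 ∧ s = 2) := by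
  have one : ∀ q, 12 + 4 * s = 2 * q + s * q → q = 5 ∧ s = 2 := by
    intro q h
    obtain rfl : q = 5 := by
      rcases lt_trichotomy q 5 with h5 | h5 | h5
      · nlinarith
      · exact h5
      · nlinarith
    omega
  have two : ∀ q, 16 + 4 * s = 8 * q + 2 * s * q → q = 2 := by
    intro q h
    rcases lt_trichotomy q 2 with h5 | h5 | h5
    · nlinarith
    · exact h5
    · nlinarith
  obtain rfl | rfl | hp3 : p = 1 ∨ p = 2 ∨ 3 ≤ p := by omega
  · exact .inr (.inl ⟨rfl, one q (by linarith)⟩)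
  · exact .inl ⟨rfl, two q (by linarith)⟩
  obtain rfl | rfl | hq3 : q = 1 ∨ q = 2 ∨ 3 ≤ q := by omega
  · obtain ⟨h5, h2⟩ := one p (by linarith)
    exact .inr (.inr ⟨h5, rfl, h2⟩)
  · exact .inl ⟨two p (by linarith), rfl⟩
  · have hpq : 3 * 3 ≤ p * q := Nat.mul_le_mul hp3 hq3
    nlinarith [Nat.mul_le_mul_left s hpq]

namespace CliqueJoin

/-- The sizes of the cliques on one side. -/
def sizes (C : CliqueJoin G P) (b : Bool) : Multiset ℕ :=
  (Finset.univ.filter fun i => C.side i = b).val.map C.size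

variable (C : CliqueJoin G P)

lemma mem_sizes {b : Bool} {n : ℕ} : n ∈ C.sizes b ↔ ∃ i, C.side i = b ∧ C.size i = n := by
  simp [sizes]

end CliqueJoin

variable [DecidableEq V] (C : CliqueJoin G P)

/-- Two cliques on the same side both have two vertices, or they are all the cliques on that side,
have one and five vertices, and all cliques on the other side have two vertices. -/
lemma TwoExceptional.size_dichotomy (hG : TwoExceptional G) (hconn : G.Connected)
    (h1 : ∃ i j, i ≠ j ∧ C.side i = C.side j) (h2 : ∃ i j, C.side i ≠ C.side j) {i j t : P}
    (hij : i ≠ j) (hside : C.side i = C.side j) (ht : C.side i ≠ C.side t) :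
    (C.size i = 2 ∧ C.size j = 2) ∨
      ((C.size i = 1 ∧ C.size j = 5 ∨ C.size i = 5 ∧ C.size j = 1) ∧ C.size t = 2 ∧
        ∀ q, C.side q = C.side i → q = i ∨ q = j) := by
  have hit : i ≠ t := ne_of_apply_ne C.side ht
  have hjt : j ≠ t := ne_of_apply_ne C.side (hside ▸ ht)
  have hinj : Function.Injective ![i, j, t] := by
    intro x y
    fin_cases x <;> fin_cases y <;> simp [hij, hit, hjt, hij.symm, hit.symm, hjt.symm]
  obtain ⟨c, hc0, hc, hout⟩ := hG.exists_eigenvector C hconn h1 h2 hinj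
  have hc0' : ¬(c 0 = 0 ∧ c 1 = 0 ∧ c 2 = 0) := fun h => hc0 (funext fun k => by
    fin_cases k
    exacts [h.1, h.2.1, h.2.2])
  have e0 := hc 0
  have e1 := hc 1
  have e2 := hc 2
  simp only [Fin.sum_univ_three, CliqueJoin.core, of_apply, cons_val, hij, hit, hjt, hij.symm,
    hit.symm, hjt.symm, ← hside, ht, ht.symm, if_true, if_false] at e0 e1 e2
  obtain ⟨p, hp⟩ : ∃ p, C.size i = p := ⟨_, rfl⟩
  obtain ⟨q, hq⟩ : ∃ q, C.size j = q := ⟨_, rfl⟩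
  obtain ⟨s, hs⟩ : ∃ s, C.size t = s := ⟨_, rfl⟩
  rw [hp, hq, hs] at e0 e1 e2 ⊢
  have hdet : (8 + 4 * (s + p + q) : ℝ) = 6 * p * q + s * p * q := by
    by_contra hne
    rw [← sub_eq_zero] at hne
    refine hc0' ⟨?_, ?_, ?_⟩
    · refine (mul_eq_zero.mp ?_).resolve_left hne
      linear_combination (2 * q + 2 * s + 4 : ℝ) * e0 - (q * s + 4 * q : ℝ) * e1 +
        (q * s - 2 * s : ℝ) * e2
    · refine (mul_eq_zero.mp ?_).resolve_left hne
      linear_combination (2 * p + 2 * s + 4 : ℝ) * e1 - (p * s + 4 * p : ℝ) * e0 +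
        (p * s - 2 * s : ℝ) * e2
    · refine (mul_eq_zero.mp ?_).resolve_left hne
      linear_combination (p * q - 2 * p : ℝ) * e0 + (p * q - 2 * q : ℝ) * e1 +
        (2 * p + 2 * q + 4 - 3 * p * q : ℝ) * e2
  rcases DistanceSpectrum.size_dichotomy (hp ▸ C.size_pos i)
    (hq ▸ C.size_pos j) (hs ▸ C.size_pos t) (by exact_mod_cast hdet) with h | h
  · exact .inl h
  · refine .inr ⟨by tauto, by tauto, fun r hri => ?_⟩
    by_contra! hne
    have hrt : r ≠ t := by rintro rfl; exact ht hri.symm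
    have e3 := hout r (by intro k; fin_cases k <;> simp [hne.1.symm, hne.2.symm, hrt.symm])
    simp only [Fin.sum_univ_three, CliqueJoin.core, of_apply, cons_val, hne.1, hne.2, hrt, hri,
      ← hside, ht, if_true, if_false, hp, hq, hs] at e3
    refine hc0' ?_
    rcases h with ⟨rfl, rfl, rfl⟩ | ⟨rfl, rfl, rfl⟩ <;> norm_num at e0 e1 e3 <;>
      refine ⟨?_, ?_, ?_⟩ <;> linarith

end Classification

section Invariants

/-- The possible clique sizes on the two sides. -/
def IsShape (T F : Multiset ℕ) : Prop :=
  ∃ k, 1 ≤ k ∧ T = Multiset.replicate k 2 ∧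
    ((∃ l, 1 ≤ l ∧ F = Multiset.replicate l 2) ∨ (∃ s, F = {s}) ∨ F = {1, 5})

/-- The clique sizes are determined, up to exchanging the sides, by the number of vertices, the
number of cliques and the number of ordered pairs at distance two. -/
lemma IsShape.unique {T F T' F' : Multiset ℕ} (h : IsShape T F) (h' : IsShape T' F')
    (hsum : T.sum + F.sum = T'.sum + F'.sum) (hcard : T.card + F.card = T'.card + F'.card)
    (hsq : T.sum ^ 2 + F.sum ^ 2 + ((T'.map (· ^ 2)).sum + (F'.map (· ^ 2)).sum) =
      T'.sum ^ 2 + F'.sum ^ 2 + ((T.map (· ^ 2)).sum + (F.map (· ^ 2)).sum)) :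
    (T = T' ∧ F = F') ∨ (T = F' ∧ F = T') := by
  have hkl : ∀ {k l k' : ℕ}, 1 ≤ k → 1 ≤ l → k + l = k' + 1 →
      (k * 2) ^ 2 + (l * 2) ^ 2 + k' * 4 = (k' * 2) ^ 2 + (k * 4 + l * 4) →
      k = k' ∧ l = 1 ∨ k = 1 ∧ l = k' := by
    intro k l k' hk hl h1 h2
    obtain ⟨k, rfl⟩ := Nat.exists_eq_add_of_le hk
    obtain ⟨l, rfl⟩ := Nat.exists_eq_add_of_le hl
    obtain rfl : k' = k + l + 1 := by omega
    have : k * l = 0 := by nlinarith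
    rcases Nat.mul_eq_zero.mp this with rfl | rfl
    · right; omega
    · left; omega
  obtain ⟨k, hk, rfl, ⟨l, hl, rfl⟩ | ⟨s, rfl⟩ | rfl⟩ := h <;>
    obtain ⟨k', hk', rfl, ⟨l', hl', rfl⟩ | ⟨s', rfl⟩ | rfl⟩ := h' <;>
    simp at hsum hcard hsq
  · have hmul : k * l = k' * l' := by
      have : (k + l) ^ 2 = (k' + l') ^ 2 := by rw [hcard]
      nlinarith
    have : (k' - k : ℤ) * (k' - l) = 0 := by
      zify at hmul hcard
      linear_combination hmul - k' * hcard
    rcases mul_eq_zero.mp this with h | h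
    · obtain rfl : k' = k := by omega
      obtain rfl : l' = l := by omega
      exact .inl ⟨rfl, rfl⟩
    · obtain rfl : k' = l := by omega
      obtain rfl : l' = k := by omega
      exact .inr ⟨rfl, rfl⟩
  · obtain rfl : s' = 2 := by omega
    rcases hkl hk hl hcard (by linarith) with ⟨rfl, rfl⟩ | ⟨rfl, rfl⟩
    · exact .inl ⟨rfl, rfl⟩
    · exact .inr ⟨rfl, rfl⟩
  · omega
  · obtain rfl : s = 2 := by omega
    rcases hkl hk' hl' hcard.symm (by linarith) with ⟨rfl, rfl⟩ | ⟨rfl, rfl⟩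
    · exact .inl ⟨rfl, rfl⟩
    · exact .inr ⟨rfl, rfl⟩
  · obtain rfl : k = k' := by omega
    obtain rfl : s = s' := by omega
    exact .inl ⟨rfl, rfl⟩
  · obtain rfl : k = k' + 1 := by omega
    obtain rfl : s = 4 := by omega
    ring_nf at hsq
    omega
  · omega
  · obtain rfl : k' = k + 1 := by omega
    obtain rfl : s' = 4 := by omega
    ring_nf at hsq
    omega
  · obtain rfl : k = k' := by omega
    exact .inl ⟨rfl, rfl⟩

end Invariants

section Spectrum

variable {V : Type*} [Fintype V] {G : SimpleGraph V} {P : Type*} [Fintype P] [DecidableEq P]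
  (C : CliqueJoin G P)

namespace CliqueJoin

lemma sum_sizes (b : Bool) : (C.sizes b).sum = ∑ i with C.side i = b, C.size i := rfl

lemma sum_map_sizes (b : Bool) (f : ℕ → ℕ) :
    ((C.sizes b).map f).sum = ∑ i with C.side i = b, f (C.size i) := by
  rw [sizes, Multiset.map_map]
  rfl

lemma sum_sizes_add : (C.sizes true).sum + (C.sizes false).sum = Fintype.card V := by
  rw [← C.sum_size, ← Finset.sum_fiberwise Finset.univ C.side, Fintype.sum_bool]
  rfl

lemma card_sizes_add : (C.sizes true).card + (C.sizes false).card = Fintype.card P := by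
  rw [← Finset.card_univ, ← Finset.card_filter_add_card_filter_not (fun i => C.side i = true)]
  simp only [sizes, Multiset.card_map, Finset.card_val, Bool.not_eq_true]

end CliqueJoin

variable [DecidableEq V]

lemma TwoExceptional.isShape_sizes (hG : TwoExceptional G) (hconn : G.Connected)
    (h1 : ∃ i j, i ≠ j ∧ C.side i = C.side j) (h2 : ∃ i j, C.side i ≠ C.side j) :
    ∃ b, IsShape (C.sizes b) (C.sizes !b) := by
  have hne : ∀ b, ∃ i, C.side i = b := by
    intro b
    obtain ⟨i, j, hij⟩ := h2
    by_cases h : C.side i = b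
    · exact ⟨i, h⟩
    · exact ⟨j, by revert h hij; cases C.side i <;> cases C.side j <;> cases b <;> simp⟩
  have hall : ∀ b, (∀ i, C.side i = b → C.size i = 2) →
      ∃ k, 1 ≤ k ∧ C.sizes b = Multiset.replicate k 2 := by
    intro b hb
    refine ⟨_, ?_, Multiset.eq_replicate_card.mpr fun n hn => ?_⟩
    · obtain ⟨i, hi⟩ := hne b
      exact Multiset.card_pos_iff_exists_mem.mpr ⟨_, (C.mem_sizes).mpr ⟨i, hi, rfl⟩⟩
    · obtain ⟨i, hi, rfl⟩ := (C.mem_sizes).mp hn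
      exact hb i hi
  by_cases hA : ∃ i j, i ≠ j ∧ C.side i = C.side j ∧ ¬(C.size i = 2 ∧ C.size j = 2)
  · obtain ⟨i, j, hij, hside, hsize⟩ := hA
    have hdich := fun t (ht : C.side i ≠ C.side t) =>
      (hG.size_dichotomy C hconn h1 h2 hij hside ht).resolve_left hsize
    obtain ⟨k, hk, hrep⟩ := hall (!C.side i) fun t ht => (hdich t (by simp [ht])).2.1
    refine ⟨!C.side i, k, hk, hrep, .inr (.inr ?_)⟩
    obtain ⟨t, ht⟩ := hne (!C.side i)
    obtain ⟨hs, -, hq⟩ := hdich t (by simp [ht])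
    have hfilter : (Finset.univ.filter fun q => C.side q = C.side i) = {i, j} := by
      ext q
      simp only [Finset.mem_filter_univ, Finset.mem_insert, Finset.mem_singleton]
      exact ⟨hq q, by rintro (rfl | rfl) <;> simp [hside]⟩
    rw [Bool.not_not, CliqueJoin.sizes, hfilter, Finset.insert_val_of_notMem (by simpa using hij)]
    rcases hs with ⟨hi, hj⟩ | ⟨hi, hj⟩
    · simp [hi, hj]
    · simpa [hi, hj] using Multiset.pair_comm 5 1
  · push Not at hA
    have hpair : ∀ {i j}, i ≠ j → C.side i = C.side j → ∀ q, C.side q = C.side i →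
        C.size q = 2 := by
      intro i j hij hside q hq
      by_cases hqi : q = i
      · exact hqi ▸ (hA i j hij hside).1
      · exact (hA q i hqi hq).1
    obtain ⟨i, j, hij, hside⟩ := h1
    obtain ⟨k, hk, hrep⟩ := hall (C.side i) (hpair hij hside)
    refine ⟨C.side i, k, hk, hrep, ?_⟩
    obtain ⟨t, ht⟩ := hne (!C.side i)
    by_cases hsub : ∃ t', t ≠ t' ∧ C.side t = C.side t'
    · obtain ⟨t', htt', hside'⟩ := hsub
      exact .inl (hall _ (ht ▸ hpair htt' hside'))
    · push Not at hsub
      have hfilter : (Finset.univ.filter fun q => C.side q = !C.side i) = {t} := by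
        ext q
        simp only [Finset.mem_filter_univ, Finset.mem_singleton]
        refine ⟨fun hq => ?_, by rintro rfl; exact ht⟩
        by_contra hne'
        exact hsub q (Ne.symm hne') (ht.trans hq.symm)
      exact .inr (.inl ⟨C.size t, by rw [CliqueJoin.sizes, hfilter]; rfl⟩)

lemma TwoExceptional.trace_sq_distMatrix (hG : TwoExceptional G) (hconn : G.Connected) :
    (distMatrix G * distMatrix G).trace + Fintype.card V +
      3 * ((((C.sizes true).map (· ^ 2)).sum + ((C.sizes false).map (· ^ 2)).sum : ℕ) : ℝ) =
      (Fintype.card V : ℝ) ^ 2 +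
        3 * (((C.sizes true).sum ^ 2 + (C.sizes false).sum ^ 2 : ℕ) : ℝ) := by
  have hentry : ∀ x y, distMatrix G x y * distMatrix G y x = 1 +
      3 * (if C.side (C.part x) = C.side (C.part y) then 1 else 0) -
      3 * (if C.part x = C.part y then 1 else 0) - if x = y then 1 else 0 := by
    intro x y
    have h := hG.distMatrix_add_one_apply_eq_core C hconn x y
    rw [Matrix.add_apply, Matrix.one_apply, CliqueJoin.core, of_apply] at h
    have hsymm : distMatrix G y x = distMatrix G x y := by
      simp [distMatrix, SimpleGraph.dist_comm]
    rw [hsymm, eq_sub_of_add_eq h]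
    rcases eq_or_ne x y with rfl | hxy
    · simp
    · by_cases hp : C.part x = C.part y
      · simp [hxy, hp]
      · by_cases hs : C.side (C.part x) = C.side (C.part y)
        · simp [hxy, hp, hs]; norm_num
        · simp [hxy, hp, hs]
  have hpart : ∑ x, ∑ y, (if C.part x = C.part y then (1 : ℝ) else 0) =
      ((((C.sizes true).map (· ^ 2)).sum + ((C.sizes false).map (· ^ 2)).sum : ℕ) : ℝ) := by
    simp_rw [fun x => C.sum_comp_part fun j => if C.part x = j then (1 : ℝ) else 0]
    rw [C.sum_comp_part fun i => ∑ j, C.size j * if i = j then (1 : ℝ) else 0,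
      ← Finset.sum_fiberwise Finset.univ C.side, Fintype.sum_bool]
    simp [C.sum_map_sizes, pow_two]
  have hside : ∑ x, ∑ y, (if C.side (C.part x) = C.side (C.part y) then (1 : ℝ) else 0) =
      (((C.sizes true).sum ^ 2 + (C.sizes false).sum ^ 2 : ℕ) : ℝ) := by
    simp_rw [fun x => C.sum_comp_part fun j => if C.side (C.part x) = C.side j then (1 : ℝ) else 0]
    rw [C.sum_comp_part fun i => ∑ j, C.size j * if C.side i = C.side j then (1 : ℝ) else 0,
      ← Finset.sum_fiberwise Finset.univ C.side, Fintype.sum_bool]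
    have hb : ∀ b, ∑ i with C.side i = b,
        (C.size i * ∑ j, C.size j * if C.side i = C.side j then (1 : ℝ) else 0) =
        ((C.sizes b).sum : ℝ) ^ 2 := by
      intro b
      rw [C.sum_sizes, Nat.cast_sum, pow_two, Finset.sum_mul]
      refine Finset.sum_congr rfl fun i hi => ?_
      rw [(Finset.mem_filter.mp hi).2]
      simp [Finset.sum_filter, eq_comm]
    rw [hb, hb]
    push_cast
    rfl
  rw [← hpart, ← hside]
  simp only [trace, diag_apply, Matrix.mul_apply, hentry, Finset.sum_sub_distrib,
    Finset.sum_add_distrib, ← Finset.mul_sum]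
  simp
  ring

end Spectrum

section Isomorphism

variable {V W : Type*} [Fintype V] [Fintype W] {G : SimpleGraph V} {H : SimpleGraph W}
  {P Q : Type*} [Fintype P] [DecidableEq P] [Fintype Q] [DecidableEq Q]

namespace CliqueJoin

/-- Exchange the two sides. -/
def flip {V : Type*} {G : SimpleGraph V} {P : Type*} (C : CliqueJoin G P) : CliqueJoin G P where
  part := C.part
  side i := !C.side i
  surjective := C.surjective
  adj_iff x y := by simp [C.adj_iff]

lemma sizes_flip (C : CliqueJoin G P) (b : Bool) : C.flip.sizes b = C.sizes !b := by
  simp only [sizes, flip, Bool.not_eq_eq_eq_not]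
  rfl

lemma card_side_size_eq (C : CliqueJoin G P) (l : Bool × ℕ) :
    Fintype.card {i // (C.side i, C.size i) = l} = (C.sizes l.1).count l.2 := by
  rw [sizes, Multiset.count_map, Fintype.card_subtype, ← Finset.filter_val, Finset.card_val,
    Finset.filter_filter]
  simp only [Prod.ext_iff, eq_comm]

/-- Graphs with the same clique sizes on both sides are isomorphic. -/
lemma nonempty_iso (C : CliqueJoin G P) (D : CliqueJoin H Q) (h : ∀ b, C.sizes b = D.sizes b) :
    Nonempty (G ≃g H) := by
  have e : ∀ l : Bool × ℕ,
      {i // (C.side i, C.size i) = l} ≃ {i // (D.side i, D.size i) = l} := fun l =>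
    Fintype.equivOfCardEq (by rw [card_side_size_eq, card_side_size_eq, h])
  set E : P ≃ Q := Equiv.ofFiberEquiv e
  have hE : ∀ i, (D.side (E i), D.size (E i)) = (C.side i, C.size i) := Equiv.ofFiberEquiv_map e
  have f : ∀ q, {x // E (C.part x) = q} ≃ {y // D.part y = q} := fun q =>
    Fintype.equivOfCardEq (by
      have := congrArg Prod.snd (hE (E.symm q))
      simp only [E.apply_symm_apply] at this
      simp only [← E.eq_symm_apply]
      exact this.symm)
  set F : V ≃ W := Equiv.ofFiberEquiv f
  have hF : ∀ x, D.part (F x) = E (C.part x) := Equiv.ofFiberEquiv_map f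
  refine ⟨⟨F, fun {x y} => ?_⟩⟩
  have hs : ∀ i, D.side (E i) = C.side i := fun i => congrArg Prod.fst (hE i)
  rw [C.adj_iff, D.adj_iff]
  simp [hF, hs]

end CliqueJoin

end Isomorphism

lemma card_distEigs {V : Type*} [Fintype V] [DecidableEq V] (G : SimpleGraph V) :
    (distEigs G).card = Fintype.card V := by
  obtain ⟨U, d, -, -, -, h⟩ := exists_orthogonal_diagonalization (isHermitian_distMatrix G)
  simp [distEigs, h]

lemma nonempty_iso_of_distEigs_eq {V W : Type*} [Fintype V] [DecidableEq V] [Fintype W]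
    [DecidableEq W] {G : SimpleGraph V} {H : SimpleGraph W} (hG : G.Connected)
    (hH : H.Connected) (h2 : TwoExceptional G) (hspec : distEigs H = distEigs G) :
    Nonempty (H ≃g G) := by
  have h2' : TwoExceptional H := by rwa [TwoExceptional, hspec]
  obtain ⟨P, _, _, C, hC1, hC2⟩ := h2.exists_cliqueJoin hG
  obtain ⟨Q, _, _, D, hD1, hD2⟩ := h2'.exists_cliqueJoin hH
  have hcard : Fintype.card W = Fintype.card V := by
    rw [← card_distEigs G, ← card_distEigs H, hspec]
  have hparts : Fintype.card Q = Fintype.card P := by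
    rw [← h2.rank_eq_card C hG hC1 hC2, ← h2'.rank_eq_card D hH hD1 hD2,
      rank_add_one_eq_countP (isHermitian_distMatrix G),
      rank_add_one_eq_countP (isHermitian_distMatrix H)]
    exact congrArg _ hspec
  have htrace : (distMatrix H * distMatrix H).trace = (distMatrix G * distMatrix G).trace := by
    rw [← sum_sq_roots_charpoly (isHermitian_distMatrix G),
      ← sum_sq_roots_charpoly (isHermitian_distMatrix H)]
    exact congrArg (fun s : Multiset ℝ => (s.map fun t => t ^ 2).sum) hspec
  have tG := h2.trace_sq_distMatrix C hG
  have tH := h2'.trace_sq_distMatrix D hH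
  rw [htrace, hcard] at tH
  have hsq : (C.sizes true).sum ^ 2 + (C.sizes false).sum ^ 2 +
      (((D.sizes true).map (· ^ 2)).sum + ((D.sizes false).map (· ^ 2)).sum) =
      (D.sizes true).sum ^ 2 + (D.sizes false).sum ^ 2 +
      (((C.sizes true).map (· ^ 2)).sum + ((C.sizes false).map (· ^ 2)).sum) := by
    rw [← Nat.cast_inj (R := ℝ)]
    push_cast at tG tH ⊢
    linarith
  have hsum := (C.sum_sizes_add.trans hcard.symm).trans D.sum_sizes_add.symm
  have hnum := (C.card_sizes_add.trans hparts.symm).trans D.card_sizes_add.symm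
  suffices h : (∀ b, D.sizes b = C.sizes b) ∨ ∀ b, D.sizes b = C.flip.sizes b by
    rcases h with h | h
    · exact D.nonempty_iso C h
    · exact D.nonempty_iso C.flip h
  simp only [CliqueJoin.sizes_flip, Bool.forall_bool, Bool.not_true, Bool.not_false]
  obtain ⟨b, hb⟩ := h2.isShape_sizes C hG hC1 hC2
  obtain ⟨b', hb'⟩ := h2'.isShape_sizes D hH hD1 hD2
  have key := hb.unique hb'
    (by cases b <;> cases b' <;> simp only [Bool.not_true, Bool.not_false] <;> omega)
    (by cases b <;> cases b' <;> simp only [Bool.not_true, Bool.not_false] <;> omega)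
    (by cases b <;> cases b' <;> simp only [Bool.not_true, Bool.not_false] <;> linarith)
  cases b <;> cases b' <;> simp only [Bool.not_true, Bool.not_false] at key <;>
    rcases key with ⟨e1, e2⟩ | ⟨e1, e2⟩ <;> simp [e1, e2]

end DistanceSpectrum

/- **Statement 18.** Every finite connected simple graph with exactly two distance eigenvalues
(with multiplicity) different from `−1` and `−3` is determined by its distance spectrum: if
`G` has this property and `H` is any finite connected simple graph with the same distance
spectrum as `G`, then `H ≅ G`. -/
open scoped Classical in
theorem exactly_two_distEigs_determined_by_distance_spectrum
    {V W : Type*} [Fintype V] [DecidableEq V] [Fintype W] [DecidableEq W]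
    (G : SimpleGraph V) (H : SimpleGraph W) (hG : G.Connected) (hH : H.Connected)
    (h2 : ((distEigs G).filter fun x => x ≠ -1 ∧ x ≠ -3).card = 2)
    (hspec : distEigs H = distEigs G) :
    Nonempty (H ≃g G) := by
  refine DistanceSpectrum.nonempty_iso_of_distEigs_eq hG hH ?_ hspec
  rw [DistanceSpectrum.TwoExceptional, Multiset.countP_eq_card_filter]
  convert h2
end
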